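/- arXiv:1310.5311 — 5 statements merged into one kernel-verified Lean document; each statement's English description precedes it below -/
import Mathlib

section
/- Let p be a prime and n a positive integer. Inside a fixed algebraic closure of ℚ_p, there are only finitely many intermediate fields K such that K is a finite Galois extension of ℚ_p of degree at most n. -/
lemma exists_pos_le_of_finite {α : Type*} {s : Set α} (hs : s.Finite) (f : α → ℝ)
    (h : ∀ a ∈ s, 0 < f a) : ∃ r > 0, ∀ a ∈ s, r ≤ f a := by
  rcases s.eq_empty_or_nonempty with rfl | hne
  · exact ⟨1, one_pos, by simp⟩
  · obtain ⟨a, ha, hmin⟩ := Set.exists_min_image s f hs hne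
    exact ⟨f a, h a ha, hmin⟩

open Polynomial in
/-- The monic polynomial of degree `N` with given lower coefficients. -/
noncomputable def padicPoly (p : ℕ) [Fact p.Prime] (N : ℕ) (u : Fin N → ℤ_[p]) : ℚ_[p][X] :=
  X ^ N + ∑ i : Fin N, C (u i : ℚ_[p]) * X ^ (i : ℕ)

open Polynomial in
lemma padicPoly_monic (p : ℕ) [Fact p.Prime] (N : ℕ) (u : Fin N → ℤ_[p]) :
    (padicPoly p N u).Monic :=
  monic_X_pow_add (degree_sum_fin_lt _)

open Polynomial in
lemma padicPoly_natDegree (p : ℕ) [Fact p.Prime] (N : ℕ) (u : Fin N → ℤ_[p]) :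
    (padicPoly p N u).natDegree = N := by
  have h := degree_sum_fin_lt (fun i : Fin N => (u i : ℚ_[p]))
  apply natDegree_eq_of_degree_eq_some
  unfold padicPoly
  rw [degree_add_eq_left_of_degree_lt] <;> simp [h]

open Polynomial in
lemma padicPoly_coeff_sub (p : ℕ) [Fact p.Prime] (N : ℕ) (u v : Fin N → ℤ_[p]) (ε : ℝ)
    (hε : 0 < ε) (h : ∀ i, ‖u i - v i‖ < ε) (i : ℕ) :
    ‖(padicPoly p N u).coeff i - (padicPoly p N v).coeff i‖ < ε := by
  have key : (padicPoly p N u).coeff i - (padicPoly p N v).coeff i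
      = ∑ j : Fin N, if i = (j : ℕ) then ((u j - v j : ℤ_[p]) : ℚ_[p]) else 0 := by
    simp only [padicPoly, coeff_add, finsetSum_coeff, coeff_C_mul, coeff_X_pow, mul_ite, mul_one,
      mul_zero, add_sub_add_left_eq_sub, ← Finset.sum_sub_distrib]
    refine Finset.sum_congr rfl fun j _ => ?_
    split_ifs <;> simp
  rw [key]
  by_cases hi : i < N
  · rw [Finset.sum_eq_single (⟨i, hi⟩ : Fin N)]
    · rw [if_pos rfl]
      exact h ⟨i, hi⟩
    · intro b _ hb
      rw [if_neg]
      intro h'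
      exact hb (Fin.ext h'.symm)
    · simp
  · rw [Finset.sum_eq_zero]
    · simpa using hε
    · intro j _
      rw [if_neg]
      have := j.2
      omega

open Polynomial in
lemma exists_padicPoly (p : ℕ) [Fact p.Prime] (N : ℕ) (x : PadicAlgCl p) (hx : ‖x‖ ≤ 1)
    (hN : (minpoly ℚ_[p] x).natDegree ≤ N) :
    ∃ u : Fin N → ℤ_[p], aeval x (padicPoly p N u) = 0 := by
  have hint : IsIntegral ℚ_[p] x := Algebra.IsIntegral.isIntegral x
  have hm := minpoly.monic hint
  have hc : ∀ n, ‖(minpoly ℚ_[p] x).coeff n‖ ≤ 1 :=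
    (spectralValue_le_one_iff hm).1 hx
  set f := minpoly ℚ_[p] x * X ^ (N - (minpoly ℚ_[p] x).natDegree) with hf
  have hfm : f.Monic := hm.mul (monic_X_pow _)
  have hfd : f.natDegree = N := by
    rw [hf, hm.natDegree_mul (monic_X_pow _), natDegree_X_pow]; omega
  have hfc : ∀ n, ‖f.coeff n‖ ≤ 1 := by
    intro n
    rw [hf, coeff_mul_X_pow']
    split_ifs
    · exact hc _
    · simp
  refine ⟨fun i => ⟨f.coeff i, hfc i⟩, ?_⟩
  have : padicPoly p N (fun i => ⟨f.coeff i, hfc i⟩) = f := by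
    conv_rhs => rw [hfm.as_sum, hfd]
    simp only [padicPoly]
    rw [Finset.sum_range (fun i => C (f.coeff i) * X ^ i)]
  rw [this, hf]
  simp

lemma exists_far_element (p : ℕ) [Fact p.Prime] (F K : IntermediateField ℚ_[p] (PadicAlgCl p))
    [FiniteDimensional ℚ_[p] F] (h : F < K) :
    ∃ x ∈ K, ‖x‖ ≤ 1 ∧ ∀ y ∈ F, ((p : ℝ) ^ 2)⁻¹ ≤ ‖x - y‖ := by
  have hp1 : (1 : ℝ) < p := by exact_mod_cast (Fact.out : p.Prime).one_lt
  have hp0 : (p : ℚ_[p]) ≠ 0 := by exact_mod_cast (Fact.out : p.Prime).ne_zero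
  let V : Submodule ℚ_[p] K.toSubmodule := F.toSubmodule.comap K.toSubmodule.subtype
  have hVc : IsClosed (V : Set K.toSubmodule) := by
    have : IsClosed (F.toSubmodule : Set (PadicAlgCl p)) := by
      have : FiniteDimensional ℚ_[p] F.toSubmodule := ‹FiniteDimensional ℚ_[p] F›
      exact Submodule.closed_of_finiteDimensional _
    exact this.preimage continuous_subtype_val
  obtain ⟨z, hzK, hzF⟩ := SetLike.exists_of_lt h
  obtain ⟨x, hx, hd⟩ := riesz_lemma_of_norm_lt (c := (p : ℚ_[p])⁻¹) (R := (p : ℝ) ^ 2)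
    (by simpa using hp1) (by simp; nlinarith) hVc ⟨⟨z, hzK⟩, hzF⟩
  have hnp : ‖(p : ℚ_[p]) ^ 2‖ = ((p : ℝ) ^ 2)⁻¹ := by simp
  refine ⟨((p : ℚ_[p]) ^ 2) • (x : PadicAlgCl p), K.smul_mem x.2, ?_, ?_⟩
  · rw [norm_smul, hnp]
    have : ‖(x : PadicAlgCl p)‖ ≤ (p : ℝ) ^ 2 := hx
    rw [inv_mul_le_iff₀ (by positivity)]
    simpa using this
  · intro y hy
    have hy' : ((p : ℚ_[p]) ^ 2)⁻¹ • y ∈ F := F.smul_mem hy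
    have := hd ⟨((p : ℚ_[p]) ^ 2)⁻¹ • y, h.le hy'⟩ hy'
    have h1 : 1 ≤ ‖(x : PadicAlgCl p) - ((p : ℚ_[p]) ^ 2)⁻¹ • y‖ := this
    have h2 : ((p : ℚ_[p]) ^ 2) • (x : PadicAlgCl p) - y
        = ((p : ℚ_[p]) ^ 2) • ((x : PadicAlgCl p) - ((p : ℚ_[p]) ^ 2)⁻¹ • y) := by
      rw [smul_sub, smul_inv_smul₀ (pow_ne_zero _ hp0)]
    rw [h2, norm_smul, hnp]
    exact le_mul_of_one_le_right (by positivity) h1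

open Polynomial in
/-- Krasner: elements close enough to a fixed `a` generate a field containing `a`. -/
lemma exists_krasner_radius (p : ℕ) [Fact p.Prime] (a : PadicAlgCl p) :
    ∃ δ > 0, ∀ (K : IntermediateField ℚ_[p] (PadicAlgCl p)), ∀ x ∈ K, ‖x - a‖ < δ → a ∈ K := by
  classical
  have hint : IsIntegral ℚ_[p] a := Algebra.IsIntegral.isIntegral a
  have hfin : ((minpoly ℚ_[p] a).rootSet (PadicAlgCl p) \ {a}).Finite :=
    (rootSet_finite _ _).subset Set.sdiff_subset
  obtain ⟨δ, hδ, h⟩ : ∃ δ > 0, ∀ b ∈ (minpoly ℚ_[p] a).rootSet (PadicAlgCl p) \ {a},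
      δ ≤ ‖a - b‖ := by
    refine exists_pos_le_of_finite hfin _ fun b hb => ?_
    rw [norm_pos_iff, sub_ne_zero]
    exact fun h => hb.2 h.symm
  refine ⟨δ, hδ, fun K x hx hxa => ?_⟩
  have : a ∈ IntermediateField.adjoin ℚ_[p] {x} := by
    refine IsKrasner.krasner (minpoly.irreducible hint).separable (IsAlgClosed.splits _)
      (Algebra.IsIntegral.isIntegral x) fun b hb hab => ?_
    rw [norm_sub_rev]
    refine hxa.trans_le (h b ⟨?_, fun h => hab h.symm⟩)
    exact (isConjRoot_iff_mem_minpoly_rootSet hint).1 hb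
  exact (IntermediateField.adjoin_simple_le_iff.2 hx) this

open Polynomial Filter Topology in
lemma finite_aux (p : ℕ) [Fact p.Prime] (N m : ℕ) :
    ∀ F : IntermediateField ℚ_[p] (PadicAlgCl p), FiniteDimensional ℚ_[p] F →
      N + 1 - Module.finrank ℚ_[p] F ≤ m →
      {K : IntermediateField ℚ_[p] (PadicAlgCl p) | F ≤ K ∧
        FiniteDimensional ℚ_[p] K ∧ Module.finrank ℚ_[p] K ≤ N}.Finite := by
  have finrank_mono' : ∀ F K : IntermediateField ℚ_[p] (PadicAlgCl p), F ≤ K →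
      FiniteDimensional ℚ_[p] K → Module.finrank ℚ_[p] F ≤ Module.finrank ℚ_[p] K := by
    intro F K h hK
    have : FiniteDimensional ℚ_[p] K.toSubmodule := hK
    exact Submodule.finrank_mono (s := F.toSubmodule) (t := K.toSubmodule) h
  induction m with
  | zero =>
    intro F hF hm
    convert Set.finite_empty
    rw [Set.eq_empty_iff_forall_notMem]
    rintro K ⟨hFK, hK, hN⟩
    have := finrank_mono' F K hFK hK
    omega
  | succ m ih =>
    intro F hF hm
    by_contra hinf
    set S := {K : IntermediateField ℚ_[p] (PadicAlgCl p) | F < K ∧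
        FiniteDimensional ℚ_[p] K ∧ Module.finrank ℚ_[p] K ≤ N} with hS
    have hSinf : S.Infinite := by
      intro hfin
      refine hinf ((hfin.union (Set.finite_singleton F)).subset ?_)
      rintro K ⟨h1, h2⟩
      rcases h1.eq_or_lt with h | h
      · right; exact h.symm
      · left; exact ⟨h, h2⟩
    have hex : ∀ K : S, ∃ x ∈ K.1, ‖x‖ ≤ 1 ∧ (∀ y ∈ F, ((p : ℝ) ^ 2)⁻¹ ≤ ‖x - y‖) ∧
        ∃ u : Fin N → ℤ_[p], aeval x (padicPoly p N u) = 0 := by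
      rintro ⟨K, h, hK, hN⟩
      obtain ⟨x, hxK, hx, hd⟩ := exists_far_element p F K h
      refine ⟨x, hxK, hx, hd, exists_padicPoly p N x hx ?_⟩
      refine le_trans ?_ hN
      have := minpoly.natDegree_le (A := ℚ_[p]) (⟨x, hxK⟩ : K)
      rwa [← minpoly.algHom_eq K.val K.val.injective] at this
    choose x hxK hx1 hxF u hu using hex
    have : Infinite S := hSinf.to_subtype
    obtain ⟨v, -, hv⟩ := (isCompact_univ (X := Fin N → ℤ_[p])).exists_mapClusterPt
      (f := (cofinite : Filter S)) (u := u) (by simp)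
    -- the roots of the limit polynomial
    have hR : {a : PadicAlgCl p | a ∈ (padicPoly p N v).aroots (PadicAlgCl p)}.Finite := by
      classical
      exact ((padicPoly p N v).aroots (PadicAlgCl p)).toFinset.finite_toSet.subset
        (fun a ha => by simpa using ha)
    choose δ hδ hδK using exists_krasner_radius p
    have hp0 : (0 : ℝ) < p := by exact_mod_cast (Fact.out : p.Prime).pos
    obtain ⟨r, hr, hrδ⟩ : ∃ r > 0, ∀ a ∈ (padicPoly p N v).aroots (PadicAlgCl p),
        r ≤ min (δ a) (((p : ℝ) ^ 2)⁻¹) :=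
      exists_pos_le_of_finite hR _ fun a _ => lt_min (hδ a) (by positivity)
    have hN0 : (N : ℝ) ≠ 0 := by
      obtain ⟨K, -, hK, hN⟩ := hSinf.nonempty
      have : 0 < Module.finrank ℚ_[p] K := Module.finrank_pos
      exact_mod_cast (by omega : N ≠ 0)
    obtain ⟨ε, hε, hεr⟩ : ∃ ε > 0, (((N : ℝ) + 1) * ε) ^ (N : ℝ)⁻¹ ≤ r := by
      refine ⟨r ^ (N : ℝ) / (N + 1), by positivity, ?_⟩
      rw [mul_div_cancel₀ _ (by positivity : (N : ℝ) + 1 ≠ 0), Real.rpow_rpow_inv hr.le hN0]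
    have hfreq : ∃ᶠ K : S in cofinite, u K ∈ Metric.ball v ε :=
      hv.frequently (Metric.ball_mem_nhds v hε)
    have hfreq2 : ∃ᶠ K : S in cofinite, ∃ a ∈ (padicPoly p N v).aroots (PadicAlgCl p),
        a ∉ F ∧ a ∈ K.1 := by
      refine hfreq.mono fun K hK => ?_
      obtain ⟨a, ha, hax⟩ := exists_aroots_norm_sub_lt_of_norm_coeff_sub_lt (g := padicPoly p N v)
        hε (hu K) (padicPoly_monic p N _) (padicPoly_monic p N _)
        (by simp [padicPoly_natDegree]) (padicPoly_coeff_sub p N _ _ ε hε (fun i => by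
          rw [← dist_eq_norm, dist_comm]
          exact (dist_le_pi_dist _ _ i).trans_lt hK)) (IsAlgClosed.splits _)
      rw [padicPoly_natDegree, max_eq_right (hx1 K), mul_one] at hax
      have hlt := (hax.trans_le hεr).trans_le (hrδ a ha)
      refine ⟨a, ha, fun haF => ?_, hδK a K.1 (x K) (hxK K) (hlt.trans_le (min_le_left _ _))⟩
      exact absurd (hxF K a haF) (not_le.2 (hlt.trans_le (min_le_right _ _)))
    rw [frequently_cofinite_iff_infinite] at hfreq2
    apply hfreq2
    have hbig : (⋃ a ∈ {a : PadicAlgCl p | a ∈ (padicPoly p N v).aroots (PadicAlgCl p) ∧ a ∉ F},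
        {K : IntermediateField ℚ_[p] (PadicAlgCl p) | F ⊔ IntermediateField.adjoin ℚ_[p] {a} ≤ K ∧
        FiniteDimensional ℚ_[p] K ∧ Module.finrank ℚ_[p] K ≤ N}).Finite := by
      refine (hR.subset fun a ha => ha.1).biUnion fun a ha => ?_
      have hfa : FiniteDimensional ℚ_[p] (IntermediateField.adjoin ℚ_[p] {a}) :=
        IntermediateField.adjoin.finiteDimensional (Algebra.IsIntegral.isIntegral a)
      have hfd : FiniteDimensional ℚ_[p]
          ↥(F ⊔ IntermediateField.adjoin ℚ_[p] {a}) := inferInstance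
      refine ih _ hfd ?_
      have hlt : Module.finrank ℚ_[p] F <
          Module.finrank ℚ_[p] ↥(F ⊔ IntermediateField.adjoin ℚ_[p] {a}) := by
        have : FiniteDimensional ℚ_[p]
          (F ⊔ IntermediateField.adjoin ℚ_[p] {a}).toSubmodule := hfd
        refine Submodule.finrank_lt_finrank_of_lt (s := F.toSubmodule)
          (t := (F ⊔ IntermediateField.adjoin ℚ_[p] {a}).toSubmodule) ?_
        refine lt_of_le_of_ne (show F ≤ _ from le_sup_left) fun h => ha.2 ?_
        have : a ∈ (F ⊔ IntermediateField.adjoin ℚ_[p] {a}).toSubmodule :=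
          (show IntermediateField.adjoin ℚ_[p] {a} ≤ _ from le_sup_right)
            (IntermediateField.mem_adjoin_simple_self _ a)
        rw [← h] at this
        exact this
      omega
    refine Set.Finite.of_finite_image (f := Subtype.val) (hbig.subset ?_)
      Subtype.val_injective.injOn
    rintro _ ⟨K, ⟨a, ha, haF, haK⟩, rfl⟩
    simp only [Set.mem_iUnion]
    refine ⟨a, ⟨ha, haF⟩, sup_le K.2.1.le (IntermediateField.adjoin_simple_le_iff.2 haK), K.2.2⟩

/-- Let `p` be a prime and `n` a positive integer.  Inside a fixed algebraic closure of
`ℚ_p`, there are only finitely many intermediate fields `K` that are finite Galois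
extensions of `ℚ_p` of degree at most `n`. -/
theorem finite_galois_extensions_of_padic_of_bounded_degree
    (p : ℕ) [Fact p.Prime] (n : ℕ) (hn : 0 < n) :
    {K : IntermediateField ℚ_[p] (AlgebraicClosure ℚ_[p]) |
      FiniteDimensional ℚ_[p] K ∧ IsGalois ℚ_[p] K ∧
        Module.finrank ℚ_[p] K ≤ n}.Finite := by
  refine (finite_aux p n _ ⊥ inferInstance le_rfl).subset ?_
  rintro K ⟨h1, -, h3⟩
  exact ⟨bot_le, h1, h3⟩
end

section
/- Let p be a prime and n a positive integer. Inside a fixed algebraic closure of ℚ_p, there are only finitely many intermediate fields K such that K is a finite abelian extension of ℚ_p of degree at most n, i.e., K/ℚ_p is Galois with commutative Galois group and [K:ℚ_p] ≤ n. -/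
open Polynomial in
theorem ker_prod_le {F V : Type*} [Field F] [AddCommGroup V] [Module F V] (f : Module.End F V)
    (s : Finset F) :
    LinearMap.ker (aeval f (∏ c ∈ s, (X - C c))) ≤ ⨆ μ, f.eigenspace μ := by
  classical
  induction s using Finset.induction_on with
  | empty => simp [Module.End.one_eq_id]
  | insert a s ha ih =>
    rw [Finset.prod_insert ha, ← sup_ker_aeval_eq_ker_aeval_mul_of_coprime]
    · refine sup_le ?_ ih
      refine le_trans (le_of_eq ?_) (le_iSup _ a)
      rw [Module.End.eigenspace_def]
      simp only [map_sub, aeval_X, aeval_C, Algebra.algebraMap_eq_smul_one]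
    · refine IsCoprime.prod_right fun c hc => ?_
      exact isCoprime_X_sub_C_of_isUnit_sub
        (isUnit_iff_ne_zero.2 (sub_ne_zero.2 (fun h => ha (h ▸ hc))))

open Polynomial in
theorem iSup_eig {F V : Type*} [Field F] [AddCommGroup V] [Module F V] (f : Module.End F V)
    {N : ℕ} (hN : 0 < N) {ζ : F} (hζ : IsPrimitiveRoot ζ N) (hf : f ^ N = 1) :
    ⨆ μ, f.eigenspace μ = ⊤ := by
  rw [eq_top_iff]
  refine le_trans ?_ (ker_prod_le f (nthRootsFinset N (1 : F)))
  rw [← X_pow_sub_one_eq_prod hN hζ]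
  simp [hf]

open Polynomial in
theorem kummer_span {F Ω : Type*} [Field F] [CharZero F] [Field Ω] [Algebra F Ω] [IsGalois F Ω]
    {N : ℕ} (hN : 0 < N) {ζ : F} (hζ : IsPrimitiveRoot ζ N) (V : Submodule F Ω)
    [FiniteDimensional F V] (hV : ∀ σ : Ω ≃ₐ[F] Ω, ∀ x ∈ V, σ x ∈ V)
    (hc : ∀ σ τ : Ω ≃ₐ[F] Ω, ∀ x ∈ V, σ (τ x) = τ (σ x))
    (he : ∀ σ : Ω ≃ₐ[F] Ω, ∀ x ∈ V, (σ ^ N) x = x) :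
    V ≤ Submodule.span F {v : Ω | v ^ N ∈ Set.range (algebraMap F Ω)} := by
  let f : (Ω ≃ₐ[F] Ω) → Module.End F V := fun σ => σ.toLinearMap.restrict (hV σ)
  have fval : ∀ σ (x : V), ((f σ x : V) : Ω) = σ x := fun σ x => rfl
  have fpow : ∀ σ (k : ℕ) (x : V), (((f σ ^ k) x : V) : Ω) = (σ ^ k) x := by
    intro σ k
    induction k with
    | zero => intro x; simp
    | succ k ih => intro x; rw [pow_succ, Module.End.mul_apply, ih, fval, pow_succ]; rfl
  have hfN : ∀ σ, f σ ^ N = 1 := by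
    intro σ; ext x; rw [fpow, he σ x x.2]; rfl
  have hss : ∀ σ, (f σ).IsFinitelySemisimple := by
    intro σ
    refine Module.End.IsSemisimple.isFinitelySemisimple ?_
    refine Module.End.isSemisimple_of_squarefree_aeval_eq_zero (p := (X ^ N - 1 : F[X])) ?_ ?_
    · refine (Polynomial.Separable.squarefree ?_)
      exact (X_pow_sub_one_separable_iff.2 (by exact_mod_cast hN.ne'))
    · simp [hfN]
  have key := Module.End.iSup_iInf_maxGenEigenspace_eq_top_of_iSup_maxGenEigenspace_eq_top_of_commute
    f (fun σ τ _ => by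
      refine LinearMap.ext fun x => Subtype.ext ?_
      exact hc σ τ x x.2) (fun σ => by
        rw [(hss σ).iSup_maxGenEigenspace_eq_top_iff]; exact iSup_eig _ hN hζ (hfN σ))
  have key2 : (⊤ : Submodule F V) ≤ (Submodule.span F {v : Ω | v ^ N ∈ Set.range (algebraMap F Ω)}).comap V.subtype := by
    rw [← key]
    refine iSup_le fun χ => fun x hx => ?_
    refine Submodule.subset_span ?_
    rw [Set.mem_ofPred_eq, InfiniteGalois.mem_range_algebraMap_iff_fixed]
    intro σ
    rw [Submodule.mem_iInf] at hx
    have h1 := hx σ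
    rw [(hss σ).maxGenEigenspace_eq_eigenspace, Module.End.mem_eigenspace_iff] at h1
    have h2 : σ x = χ σ • (x : Ω) := congrArg Subtype.val h1
    by_cases hx0 : (x : Ω) = 0
    · simp [hx0, hN.ne']
    have h3 : ∀ k : ℕ, (σ ^ k) x = (χ σ) ^ k • (x : Ω) := by
      intro k
      induction k with
      | zero => simp
      | succ k ih => rw [pow_succ, AlgEquiv.mul_apply, h2, map_smul, ih, smul_smul, pow_succ']
    have h4 := h3 N
    rw [he σ x x.2] at h4
    have h5 : (χ σ) ^ N = 1 := by
      have : ((χ σ) ^ N - 1) • (x : Ω) = 0 := by rw [sub_smul, ← h4]; simp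
      exact sub_eq_zero.1 ((smul_eq_zero.1 this).resolve_right hx0)
    simp only [Submodule.subtype_apply, map_pow]
    rw [h2, _root_.smul_pow, h5, one_smul]
  intro x hx
  exact key2 (x := ⟨x, hx⟩) trivial

theorem finite_reps (p : ℕ) [Fact p.Prime] (F : Type*) [Field F] [Algebra ℚ_[p] F]
    [FiniteDimensional ℚ_[p] F] {N : ℕ} (hN : 0 < N) :
    ∃ S : Set F, S.Finite ∧ ∀ a : F, a ≠ 0 → ∃ s ∈ S, ∃ c : F, c ≠ 0 ∧ a = s * c ^ N := by
  let : NontriviallyNormedField F := spectralNorm.nontriviallyNormedField ℚ_[p] F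
  let : NormedAlgebra ℚ_[p] F := spectralNorm.normedAlgebra ℚ_[p] F
  have : CompleteSpace F := FiniteDimensional.complete ℚ_[p] F
  have : ProperSpace F := FiniteDimensional.proper ℚ_[p] F
  have : CharZero F := charZero_of_injective_algebraMap (algebraMap ℚ_[p] F).injective
  have hopen : Set.range (fun x : F => x ^ N) ∈ nhds (1 : F) := by
    have h := (hasStrictDerivAt_pow N (1 : F)).map_nhds_eq (by simp [hN.ne'])
    rw [one_pow] at h
    rw [← h]
    exact Filter.mem_map.2 (Filter.univ_mem' fun x => ⟨x, rfl⟩)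
  set q : F := algebraMap ℚ_[p] F p with hq
  have hp1 : (1 : ℝ) < p := by exact_mod_cast (Fact.out : p.Prime).one_lt
  have hqn : ‖q‖ = (p : ℝ)⁻¹ := by rw [hq, norm_algebraMap', Padic.norm_p]
  have hq0 : q ≠ 0 := by
    rw [← norm_pos_iff, hqn]; positivity
  let A : Set F := {x | ‖q‖ ^ N ≤ ‖x‖} ∩ Metric.closedBall 0 1
  have hA : IsCompact A :=
    (isCompact_closedBall 0 1).inter_left (isClosed_le continuous_const continuous_norm)
  have hqN : 0 < ‖q‖ ^ N := by positivity
  have hA0 : ∀ x ∈ A, x ≠ 0 := fun x hx h => by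
    have := hx.1; rw [Set.mem_ofPred_eq, h, norm_zero] at this; linarith
  obtain ⟨t, htA⟩ := hA.elim_nhds_subcover' (fun x _ => {y | y / x ∈ Set.range (fun x : F => x ^ N)})
    (fun x hx => by
      have hcont : Filter.Tendsto (fun y : F => y / x) (nhds x) (nhds 1) := by
        have : ContinuousAt (fun y : F => y / x) x := by fun_prop
        simpa [ContinuousAt, div_self (hA0 x hx)] using this
      exact hcont hopen)
  refine ⟨Subtype.val '' (t : Set A), t.finite_toSet.image _, fun a ha => ?_⟩
  have hy : 1 < (‖q‖ ^ N)⁻¹ := by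
    rw [one_lt_inv₀ hqN]
    refine pow_lt_one₀ (norm_nonneg _) ?_ hN.ne'
    rw [hqn]; exact inv_lt_one_of_one_lt₀ hp1
  obtain ⟨n, hn1, hn2⟩ := exists_mem_Ioc_zpow (norm_pos_iff.2 ha) hy
  set d : F := q ^ (n + 1) with hd
  have hd0 : d ≠ 0 := zpow_ne_zero _ hq0
  have hnd : ‖d ^ N‖ = ((‖q‖ ^ N)⁻¹ ^ (n + 1))⁻¹ := by
    rw [hd, norm_pow, norm_zpow, inv_zpow, inv_inv, ← zpow_natCast, ← zpow_natCast, ← zpow_mul,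
      ← zpow_mul, mul_comm]
  have hypos : 0 < (‖q‖ ^ N)⁻¹ ^ (n + 1) := by positivity
  have hb : a * d ^ N ∈ A := by
    constructor
    · rw [Set.mem_ofPred_eq, norm_mul, hnd, ← div_eq_mul_inv, le_div_iff₀ hypos]
      refine le_trans (le_of_eq ?_) hn1.le
      rw [zpow_add_one₀ (by positivity)]
      field_simp
    · rw [mem_closedBall_zero_iff, norm_mul, hnd, ← div_eq_mul_inv, div_le_one hypos]
      exact hn2
  obtain ⟨s, hs, x, hx⟩ := Set.mem_iUnion₂.1 (htA hb)
  have hs0 := hA0 s s.2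
  have hx' : a * d ^ N = s * x ^ N := by
    simp only at hx
    rw [hx]; field_simp
  have hae : a = s * (x / d) ^ N := by
    rw [div_pow]; field_simp; exact hx'
  refine ⟨s, ⟨s, hs, rfl⟩, x / d, ?_, hae⟩
  intro h
  rw [h, zero_pow hN.ne', mul_zero] at hae
  exact ha hae

theorem finite_below {k Ω : Type*} [Field k] [CharZero k] [Field Ω] [Algebra k Ω]
    (M : IntermediateField k Ω) [FiniteDimensional k M] :
    {K : IntermediateField k Ω | K ≤ M}.Finite := by
  have : Finite (IntermediateField k M) :=
    Field.finite_intermediateField_of_exists_primitive_element k M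
      (Field.exists_primitive_element k M)
  refine (Set.finite_range (IntermediateField.lift (F := M))).subset fun K hK => ?_
  exact ⟨IntermediateField.restrict hK, IntermediateField.lift_restrict hK⟩

/-- Let `p` be a prime and `n` a positive integer.  Inside a fixed algebraic closure of
`ℚ_p`, there are only finitely many intermediate fields `K` that are finite abelian
extensions of `ℚ_p` of degree at most `n`, i.e. `K/ℚ_p` is Galois with commutative Galois
group and `[K : ℚ_p] ≤ n`. -/
theorem finite_abelian_extensions_of_padic_of_bounded_degree
    (p : ℕ) [Fact p.Prime] (n : ℕ) (hn : 0 < n) :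
    {K : IntermediateField ℚ_[p] (AlgebraicClosure ℚ_[p]) |
      FiniteDimensional ℚ_[p] K ∧ IsGalois ℚ_[p] K ∧
        (∀ σ τ : K ≃ₐ[ℚ_[p]] K, σ * τ = τ * σ) ∧
        Module.finrank ℚ_[p] K ≤ n}.Finite := by
  classical
  set Ω := AlgebraicClosure ℚ_[p] with hΩ
  have hN : 0 < n.factorial := n.factorial_pos
  set N := n.factorial with hNdef
  have : NeZero (N : Ω) := ⟨by exact_mod_cast hN.ne'⟩
  obtain ⟨ζ, hζ⟩ := HasEnoughRootsOfUnity.exists_primitiveRoot Ω N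
  let F : IntermediateField ℚ_[p] Ω := IntermediateField.adjoin ℚ_[p] {ζ}
  have hFfin : FiniteDimensional ℚ_[p] F :=
    IntermediateField.adjoin.finiteDimensional (Algebra.IsIntegral.isIntegral ζ)
  have hζF : ζ ∈ F := IntermediateField.mem_adjoin_simple_self _ _
  have hζ' : IsPrimitiveRoot (⟨ζ, hζF⟩ : F) N :=
    IsPrimitiveRoot.of_map_of_injective (f := algebraMap F Ω) hζ (algebraMap F Ω).injective
  have hGal : IsGalois F Ω := inferInstance
  obtain ⟨S, hS, hSF⟩ := finite_reps p F hN
  let T : Set Ω := {x | ∃ s ∈ S, x ^ N = (s : Ω)}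
  have hT : T.Finite := by
    have : T = ⋃ s ∈ S, {x : Ω | x ^ N = (s : Ω)} := by ext x; simp [T]
    rw [this]
    refine hS.biUnion fun s _ => ?_
    refine (Polynomial.nthRoots N (s : Ω)).toFinset.finite_toSet.subset fun x hx => ?_
    simpa [Polynomial.mem_nthRoots hN] using hx
  let M : IntermediateField ℚ_[p] Ω := F ⊔ IntermediateField.adjoin ℚ_[p] T
  have hTfin : FiniteDimensional ℚ_[p] (IntermediateField.adjoin ℚ_[p] T) := by
    have := hT.to_subtype
    exact IntermediateField.finiteDimensional_adjoin fun x _ => Algebra.IsIntegral.isIntegral x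
  have hMfin : FiniteDimensional ℚ_[p] M := IntermediateField.finiteDimensional_sup _ _
  have hFM : F ≤ M := le_sup_left
  have hTM : ∀ x ∈ T, x ∈ M := fun x hx =>
    (le_sup_right : _ ≤ M) (IntermediateField.subset_adjoin _ _ hx)
  refine (finite_below M).subset ?_
  rintro K ⟨hK, hKG, hKc, hKn⟩
  let V : Submodule F Ω := Submodule.span F (K : Set Ω)
  have hKmem : ∀ (σ : Ω ≃ₐ[F] Ω), ∀ x : K, σ x = ((σ.restrictScalars ℚ_[p]).restrictNormal K x : K) := by
    intro σ x
    exact ((σ.restrictScalars ℚ_[p]).restrictNormal_commutes K x).symm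
  have hext : ∀ (f g : Ω →ₗ[F] Ω), (∀ x : K, f x = g x) → ∀ x ∈ V, f x = g x := by
    intro f g h x hx
    exact LinearMap.eqOn_span (fun y hy => h ⟨y, hy⟩) hx
  have hVfin : FiniteDimensional F V := by
    obtain ⟨s, hs⟩ := (Module.finite_def.1 hK)
    have : V = Submodule.span F ((fun x : K => (x : Ω)) '' (s : Set K)) := by
      apply le_antisymm
      · refine Submodule.span_le.2 fun y hy => ?_
        have h1 : (⟨y, hy⟩ : K) ∈ Submodule.span ℚ_[p] (s : Set K) := by rw [hs]; trivial
        have h2 := Submodule.mem_map_of_mem (f := K.val.toLinearMap) h1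
        rw [Submodule.map_span] at h2
        exact Submodule.span_le_restrictScalars ℚ_[p] F _ h2
      · refine Submodule.span_mono ?_
        rintro _ ⟨x, -, rfl⟩
        exact x.2
    rw [this]
    exact FiniteDimensional.span_of_finite F (s.finite_toSet.image _)
  have hVle := kummer_span hN hζ' V
    (by
      intro σ x hx
      have : V ≤ V.comap σ.toLinearMap := by
        refine Submodule.span_le.2 fun y hy => ?_
        refine Submodule.subset_span ?_
        have := hKmem σ ⟨y, hy⟩
        change σ y ∈ K
        change σ y = _ at this
        rw [this]; exact Subtype.property _
      exact this hx)
    (by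
      intro σ τ
      refine hext (σ.toLinearMap ∘ₗ τ.toLinearMap) (τ.toLinearMap ∘ₗ σ.toLinearMap) fun x => ?_
      change σ (τ x) = τ (σ x)
      rw [hKmem τ, hKmem σ, hKmem σ x, hKmem τ]
      exact congrArg Subtype.val (DFunLike.congr_fun (hKc ((σ.restrictScalars ℚ_[p]).restrictNormal K)
        ((τ.restrictScalars ℚ_[p]).restrictNormal K)) x))
    (by
      intro σ
      refine hext ((σ ^ N).toLinearMap) LinearMap.id fun x => ?_
      change (σ ^ N) x = x
      have h1 : ∀ k : ℕ, (σ ^ k) x = ((((σ.restrictScalars ℚ_[p]).restrictNormal K) ^ k) x : K) := by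
        intro k
        induction k with
        | zero => simp
        | succ k ih => rw [pow_succ', AlgEquiv.mul_apply, ih, hKmem, pow_succ']; rfl
      rw [h1]
      have h2 : ((σ.restrictScalars ℚ_[p]).restrictNormal K) ^ N = 1 := by
        rw [← orderOf_dvd_iff_pow_eq_one]
        refine (orderOf_dvd_natCard _).trans ?_
        rw [IsGalois.card_aut_eq_finrank]
        exact Nat.dvd_factorial Module.finrank_pos hKn
      rw [h2]; rfl)
  intro x hx
  have hxV := hVle (Submodule.subset_span hx)
  refine Submodule.span_induction (p := fun y _ => y ∈ M) ?_ (zero_mem M)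
    (fun _ _ _ _ => add_mem) (fun c y _ hy => ?_) hxV
  · rintro v ⟨a, ha⟩
    by_cases hv : v = 0
    · rw [hv]; exact zero_mem M
    have ha0 : a ≠ 0 := by
      rintro rfl
      rw [map_zero] at ha
      exact hv (pow_eq_zero_iff hN.ne' |>.1 ha.symm)
    obtain ⟨s, hs, c, hc, hac⟩ := hSF a ha0
    have hc' : (c : Ω) ≠ 0 := by simpa using hc
    have h1 : v / c ∈ T := by
      refine ⟨s, hs, ?_⟩
      rw [div_pow, ← ha, hac, map_mul, map_pow]
      exact mul_div_cancel_right₀ _ (pow_ne_zero _ hc')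
    have h2 := mul_mem (hTM _ h1) (hFM c.2)
    rwa [div_mul_cancel₀ _ hc'] at h2
  · exact mul_mem (hFM c.2) hy
end

section
/- Let p be a prime and let K be an intermediate field of a fixed algebraic closure of ℚ_p over ℚ_p that is a finite Galois extension of ℚ_p. Then the Galois group Gal(K/ℚ_p) is a solvable group. -/
namespace PadicSolv

open IsLocalRing

/-- Any two endomorphisms of a finite field commute. -/
lemma ringHom_comm {k : Type*} [Field k] [Finite k] (f g : k →+* k) (x : k) :
    f (g x) = g (f x) := by
  by_cases hx : x = 0
  · simp [hx]
  obtain ⟨u, hu⟩ := IsCyclic.exists_generator (α := kˣ)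
  obtain ⟨a, ha⟩ := hu (Units.map f u)
  obtain ⟨b, hb⟩ := hu (Units.map g u)
  obtain ⟨c, hc⟩ := hu (Units.mk0 x hx)
  have key : Units.map (f : k →* k) (Units.map (g : k →* k) (Units.mk0 x hx)) =
      Units.map (g : k →* k) (Units.map (f : k →* k) (Units.mk0 x hx)) := by
    simp only at ha hb hc
    rw [← hc, map_zpow, map_zpow, map_zpow, map_zpow, ← ha, ← hb, map_zpow, map_zpow,
      ← ha, ← hb]
    simp only [← zpow_mul]
    congr 1
    ring
  simpa using congrArg Units.val key

variable {B : Type*} [CommRing B] [IsLocalRing B] {G : Type*} [Group G] [MulSemiringAction G B]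

lemma smul_mem_max (g : G) {x : B} (hx : x ∈ maximalIdeal B) : g • x ∈ maximalIdeal B := by
  rw [mem_maximalIdeal, mem_nonunits_iff] at hx ⊢
  intro h
  apply hx
  have := h.map (MulSemiringAction.toRingHom G B g⁻¹)
  simpa using this

lemma smul_mem_max_pow (g : G) (n : ℕ) {x : B} (hx : x ∈ maximalIdeal B ^ n) :
    g • x ∈ maximalIdeal B ^ n := by
  have h1 : (maximalIdeal B).map (MulSemiringAction.toRingHom G B g) ≤ maximalIdeal B := by
    rw [Ideal.map_le_iff_le_comap]
    intro y hy
    exact smul_mem_max g hy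
  have h2 := Ideal.mem_map_of_mem (MulSemiringAction.toRingHom G B g) hx
  rw [Ideal.map_pow] at h2
  exact Ideal.pow_right_mono h1 n h2

lemma smul_mem_max_pow_iff (g : G) (n : ℕ) {x : B} :
    g • x ∈ maximalIdeal B ^ n ↔ x ∈ maximalIdeal B ^ n :=
  ⟨fun h => by simpa using smul_mem_max_pow g⁻¹ n h, smul_mem_max_pow g n⟩

variable (B G) in
/-- Elements moving `m ^ j` by elements of `m ^ i`. -/
def fil (i j : ℕ) : Subgroup G where
  carrier := {g | ∀ x ∈ maximalIdeal B ^ j, g • x - x ∈ maximalIdeal B ^ i}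
  one_mem' := by simp
  mul_mem' := by
    intro a b ha hb x hx
    have h1 := ha (b • x) (smul_mem_max_pow b j hx)
    have h2 := add_mem h1 (hb x hx)
    simpa [mul_smul] using h2
  inv_mem' := by
    intro a ha x hx
    have h1 := ha (a⁻¹ • x) (smul_mem_max_pow a⁻¹ j hx)
    rw [smul_inv_smul] at h1
    simpa using neg_mem h1

lemma mem_fil {i j : ℕ} {g : G} :
    g ∈ fil B G i j ↔ ∀ x ∈ maximalIdeal B ^ j, g • x - x ∈ maximalIdeal B ^ i := Iff.rfl

lemma commutator_le_fil (H : Subgroup G) (i j : ℕ)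
    (h : ∀ a ∈ H, ∀ b ∈ H, ∀ x ∈ maximalIdeal B ^ j, a • b • x - b • a • x ∈ maximalIdeal B ^ i) :
    ⁅H, H⁆ ≤ fil B G i j := by
  rw [Subgroup.commutator_le]
  intro a ha b hb x hx
  have := h a ha b hb (a⁻¹ • b⁻¹ • x) (smul_mem_max_pow _ _ (smul_mem_max_pow _ _ hx))
  simpa [commutatorElement_def, mul_smul] using this

lemma fil_pow {n : ℕ} {g : G} (h0 : g ∈ fil B G (n + 1) 0) (h1 : g ∈ fil B G (n + 2) 1) (j : ℕ) :
    g ∈ fil B G (n + 1 + j) j := by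
  induction j with
  | zero => exact h0
  | succ j ih =>
    intro x hx
    rw [pow_succ] at hx
    induction hx using Submodule.mul_induction_on' with
    | mem_mul_mem u hu v hv =>
      have e : g • (u * v) - u * v = (g • u - u) * g • v + u * (g • v - v) := by
        rw [smul_mul']; ring
      rw [e]
      refine add_mem ?_ ?_
      · have := Ideal.mul_mem_mul (ih u hu) (smul_mem_max g hv)
        rwa [← pow_succ] at this
      · have := Ideal.mul_mem_mul hu (h1 v (by simpa using hv))
        rw [← pow_add] at this
        convert this using 2
        ring
    | add u _ v _ hu hv =>
      have := add_mem hu hv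
      rw [smul_add]
      convert this using 1
      ring

lemma step_general (n j : ℕ) {a b : G}
    (ha0 : a ∈ fil B G (n + 1) 0) (ha1 : a ∈ fil B G (n + 2) 1)
    (hb0 : b ∈ fil B G (n + 1) 0) (hb1 : b ∈ fil B G (n + 2) 1)
    (x : B) (hx : x ∈ maximalIdeal B ^ j) :
    a • b • x - b • a • x ∈ maximalIdeal B ^ (n + 2 + j) := by
  have h1 := fil_pow ha0 ha1 _ _ (fil_pow hb0 hb1 j x hx)
  have h2 := fil_pow hb0 hb1 _ _ (fil_pow ha0 ha1 j x hx)
  have h3 := sub_mem h1 h2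
  have e : a • b • x - b • a • x =
      a • (b • x - x) - (b • x - x) - (b • (a • x - x) - (a • x - x)) := by
    rw [smul_sub, smul_sub]; ring
  rw [e]
  exact Ideal.pow_le_pow_right (by omega) h3

theorem solvable_of_action [IsNoetherianRing B] [Finite (ResidueField B)]
    (hp : (maximalIdeal B).IsPrincipal) [Finite G] [FaithfulSMul G B] : IsSolvable G := by
  have h1 : derivedSeries G 1 ≤ fil B G 1 0 := by
    rw [derivedSeries_succ]
    apply commutator_le_fil
    intro a _ b _ x _
    rw [pow_one, ← Ideal.Quotient.eq]
    change residue B _ = residue B _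
    have := ringHom_comm (MulSemiringAction.toRingHom G (ResidueField B) a)
      (MulSemiringAction.toRingHom G (ResidueField B) b) (residue B x)
    simpa using this
  have h2 : derivedSeries G 2 ≤ fil B G 2 1 := by
    rw [derivedSeries_succ]
    apply commutator_le_fil
    intro a ha b hb x hx
    replace ha := mem_fil.1 (h1 ha)
    replace hb := mem_fil.1 (h1 hb)
    simp only [pow_zero, Ideal.one_eq_top, Submodule.mem_top, forall_const, pow_one] at ha hb hx
    obtain ⟨π, hπ⟩ := hp
    have hm : ∀ y, y ∈ maximalIdeal B ↔ ∃ c, y = c * π := by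
      intro y
      rw [hπ, Submodule.mem_span_singleton]
      simp [eq_comm]
    have hπm : π ∈ maximalIdeal B := (hm π).2 ⟨1, by simp⟩
    obtain ⟨c, rfl⟩ := (hm x).1 hx
    obtain ⟨u, hu⟩ := (hm _).1 (smul_mem_max a hπm)
    obtain ⟨v, hv⟩ := (hm _).1 (smul_mem_max b hπm)
    have e : a • b • (c * π) - b • a • (c * π) =
        (((a • b • c - b • c) + (b • c - c) - (b • a • c - a • c) - (a • c - c)) * (a • v * u)
          + (b • a • c) * ((a • v - v) * u - (b • u - u) * v)) * π := by
      simp only [smul_mul', hu, hv]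
      ring
    rw [e, pow_two]
    refine Ideal.mul_mem_mul (add_mem (Ideal.mul_mem_right _ _ ?_) (Ideal.mul_mem_left _ _ ?_)) hπm
    · exact sub_mem (sub_mem (add_mem (ha _) (hb _)) (hb _)) (ha _)
    · exact sub_mem (Ideal.mul_mem_right _ _ (ha _)) (Ideal.mul_mem_right _ _ (hb _))
  have hn : ∀ n, derivedSeries G (n + 2) ≤ fil B G (n + 1) 0 ∧
      derivedSeries G (n + 2) ≤ fil B G (n + 2) 1 := by
    intro n
    induction n with
    | zero => exact ⟨(derivedSeries_antitone G (by norm_num)).trans h1, h2⟩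
    | succ n ih =>
      rw [show n + 1 + 2 = (n + 2) + 1 by ring, derivedSeries_succ]
      exact ⟨commutator_le_fil _ _ _ fun a ha b hb x hx =>
          step_general n 0 (ih.1 ha) (ih.2 ha) (ih.1 hb) (ih.2 hb) x hx,
        commutator_le_fil _ _ _ fun a ha b hb x hx =>
          step_general n 1 (ih.1 ha) (ih.2 ha) (ih.1 hb) (ih.2 hb) x hx⟩
  have hex : ∀ g : G, ∃ n, g ∈ derivedSeries G n → g = 1 := by
    intro g
    by_contra! hc
    refine (hc 0).2 ?_
    apply FaithfulSMul.eq_of_smul_eq_smul (α := B)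
    intro x
    rw [one_smul, ← sub_eq_zero, ← Ideal.mem_bot,
      ← Ideal.iInf_pow_eq_bot_of_isLocalRing (maximalIdeal B) Ideal.IsPrime.ne_top',
      Ideal.mem_iInf]
    intro n
    exact Ideal.pow_le_pow_right (Nat.le_succ n) ((hn n).1 (hc _).1 x (by simp))
  choose N hN using hex
  obtain ⟨M, hM⟩ := (Set.finite_range N).bddAbove
  refine ⟨M, ?_⟩
  rw [eq_bot_iff]
  intro g hg
  exact Subgroup.mem_bot.2 (hN g (derivedSeries_antitone G (hM ⟨g, rfl⟩) hg))

section padic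

variable (p : ℕ) [Fact p.Prime] (K : Type*) [Field K] [Algebra ℚ_[p] K] [Algebra ℤ_[p] K]
  [IsScalarTower ℤ_[p] ℚ_[p] K] [FiniteDimensional ℚ_[p] K]

lemma isIntegral_iff (x : K) : IsIntegral ℤ_[p] x ↔ spectralNorm ℚ_[p] K x ≤ 1 := by
  have hx : IsIntegral ℚ_[p] x := IsIntegral.of_finite _ _
  rw [spectralNorm, spectralValue_le_one_iff (minpoly.monic hx)]
  constructor
  · intro h n
    rw [minpoly.isIntegrallyClosed_eq_field_fractions' ℚ_[p] h, Polynomial.coeff_map]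
    exact PadicInt.norm_le_one _
  · intro h
    have hl : minpoly ℚ_[p] x ∈ Polynomial.lifts (algebraMap ℤ_[p] ℚ_[p]) := by
      rw [Polynomial.lifts_iff_coeff_lifts]
      intro n
      exact ⟨⟨_, h n⟩, rfl⟩
    obtain ⟨q, hq, -, hm⟩ := Polynomial.lifts_and_natDegree_eq_and_monic hl (minpoly.monic hx)
    refine ⟨q, hm, ?_⟩
    have := minpoly.aeval ℚ_[p] x
    rw [← hq, Polynomial.aeval_map_algebraMap] at this
    exact this

lemma isUnit_iff (x : integralClosure ℤ_[p] K) :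
    IsUnit x ↔ spectralNorm ℚ_[p] K (x : K) = 1 := by
  have hmul : ∀ a b : K, spectralNorm ℚ_[p] K (a * b) =
      spectralNorm ℚ_[p] K a * spectralNorm ℚ_[p] K b := fun a b =>
    map_mul (spectralMulAlgNorm ℚ_[p] K) a b
  constructor
  · intro h
    obtain ⟨y, hy⟩ := h.exists_right_inv
    have h1 := hmul x y
    have h2 : (x : K) * y = 1 := by exact_mod_cast congrArg Subtype.val hy
    rw [h2, spectralNorm_one] at h1
    have hx := (isIntegral_iff p K x).1 x.2
    have hy := (isIntegral_iff p K y).1 y.2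
    have := spectralNorm_nonneg (K := ℚ_[p]) (x : K)
    have := spectralNorm_nonneg (K := ℚ_[p]) (y : K)
    nlinarith
  · intro h
    have hx0 : (x : K) ≠ 0 := by
      intro h0
      rw [h0, spectralNorm_zero] at h
      norm_num at h
    have h1 := hmul x (x : K)⁻¹
    rw [mul_inv_cancel₀ hx0, spectralNorm_one, h, one_mul] at h1
    have hy : IsIntegral ℤ_[p] (x : K)⁻¹ := (isIntegral_iff p K _).2 h1.symm.le
    exact IsUnit.of_mul_eq_one ⟨(x : K)⁻¹, hy⟩ (Subtype.ext (mul_inv_cancel₀ hx0))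

lemma isLocalRing : IsLocalRing (integralClosure ℤ_[p] K) := by
  apply IsLocalRing.of_nonunits_add
  intro a b ha hb
  rw [mem_nonunits_iff, isUnit_iff] at *
  have ha' := lt_of_le_of_ne ((isIntegral_iff p K a).1 a.2) ha
  have hb' := lt_of_le_of_ne ((isIntegral_iff p K b).1 b.2) hb
  have := isNonarchimedean_spectralNorm (K := ℚ_[p]) (L := K) a b
  exact (this.trans_lt (max_lt ha' hb')).ne

theorem main : IsSolvable (K ≃ₐ[ℚ_[p]] K) := by
  have := isLocalRing p K
  have hI : IsIntegralClosure (integralClosure ℤ_[p] K) ℤ_[p] K := inferInstance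
  have : Module.Finite ℤ_[p] (integralClosure ℤ_[p] K) :=
    IsIntegralClosure.finite ℤ_[p] ℚ_[p] K _
  have : IsDedekindDomain (integralClosure ℤ_[p] K) :=
    IsIntegralClosure.isDedekindDomain ℤ_[p] ℚ_[p] K _
  have : IsFractionRing (integralClosure ℤ_[p] K) K :=
    integralClosure.isFractionRing_of_finite_extension ℚ_[p] K
  have : IsLocalHom (algebraMap ℤ_[p] (integralClosure ℤ_[p] K)) :=
    (algebraMap_isIntegral_iff.mpr inferInstance).isLocalHom (by
      have h : Function.Injective (algebraMap ℤ_[p] K) := by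
        rw [IsScalarTower.algebraMap_eq ℤ_[p] ℚ_[p] K]
        exact (algebraMap ℚ_[p] K).injective.comp (IsFractionRing.injective ℤ_[p] ℚ_[p])
      intro a b hab
      exact h (congrArg Subtype.val hab))
  have : Finite (ResidueField ℤ_[p]) := inferInstance
  have : Finite (ResidueField (integralClosure ℤ_[p] K)) :=
    ResidueField.finite_of_finite (R := ℤ_[p]) inferInstance
  have : SMulCommClass (K ≃ₐ[ℚ_[p]] K) ℤ_[p] K := ⟨fun g r x => by
    rw [algebra_compatible_smul ℚ_[p] r, algebra_compatible_smul ℚ_[p] r, smul_comm]⟩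
  have : FaithfulSMul (K ≃ₐ[ℚ_[p]] K) (integralClosure ℤ_[p] K) := ⟨by
    intro g h hgh
    ext x
    obtain ⟨a, b, hb, rfl⟩ := IsFractionRing.div_surjective (A := integralClosure ℤ_[p] K) x
    rw [map_div₀, map_div₀]
    have h1 := congrArg Subtype.val (hgh a)
    have h2 := congrArg Subtype.val (hgh b)
    exact congrArg₂ (· / ·) h1 h2⟩
  exact solvable_of_action (B := integralClosure ℤ_[p] K)
    (maximalIdeal_isPrincipal_of_isDedekindDomain _)

end padic

end PadicSolv

/-- Let `p` be a prime and `K` an intermediate field of a fixed algebraic closure of `ℚ_p`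
over `ℚ_p` that is a finite Galois extension of `ℚ_p`.  Then the Galois group
`Gal(K/ℚ_p)` is a solvable group. -/
theorem galois_group_of_padic_isSolvable
    (p : ℕ) [Fact p.Prime] (K : IntermediateField ℚ_[p] (AlgebraicClosure ℚ_[p]))
    [FiniteDimensional ℚ_[p] K] [IsGalois ℚ_[p] K] :
    IsSolvable (K ≃ₐ[ℚ_[p]] K) := by
  exact PadicSolv.main p K
end

section
/- Let p be a prime. Let F = ∑_{j≥0} c_j T^j be a formal power series with coefficients c_j ∈ ℤ_p, and suppose some coefficient of F is a unit of ℤ_p. Let λ be the least index j with c_j ≠ 0 and let λ′ be the least index j with c_j ∈ ℤ_p^×. Let π ∈ ℂ_p satisfy 0 < ‖π‖ < 1 and ‖π‖^{λ′} > p^{−1}·‖π‖^{λ}. Then the series ∑_{j≥0} c_j π^j converges in ℂ_p and its sum S satisfies ‖S‖ = ‖π‖^{λ′}. -/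
/-- Let `p` be a prime and let `C` be a field like `ℂ_p`: a complete, algebraically closed,
nonarchimedean normed field equipped with an isometric `ℚ_p`-algebra structure (so that its
norm extends the `p`-adic norm, normalized by `‖p‖ = p⁻¹`).  Let `F = ∑_{j≥0} c_j T^j` be a
formal power series with coefficients `c_j ∈ ℤ_p` having some unit coefficient, let `lam` be
the least index `j` with `c_j ≠ 0` and `lam'` the least index `j` with `c_j ∈ ℤ_p^×`.  If
`π ∈ C` satisfies `0 < ‖π‖ < 1` and `‖π‖^lam' > p⁻¹·‖π‖^lam`, then `∑_{j≥0} c_j π^j`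
converges in `C` and its sum `S` satisfies `‖S‖ = ‖π‖^lam'`. -/
theorem norm_eval_of_power_series_at_small_pi
    (p : ℕ) [Fact p.Prime]
    (C : Type*) [NormedField C] [CompleteSpace C] [IsAlgClosed C]
    [IsUltrametricDist C] [NormedAlgebra ℚ_[p] C]
    (c : ℕ → ℤ_[p]) (lam lam' : ℕ)
    (hlam : IsLeast {j : ℕ | c j ≠ 0} lam)
    (hlam' : IsLeast {j : ℕ | IsUnit (c j)} lam')
    (π : C) (hπ0 : 0 < ‖π‖) (hπ1 : ‖π‖ < 1)
    (hgap : (p : ℝ)⁻¹ * ‖π‖ ^ lam < ‖π‖ ^ lam') :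
    ∃ S : C,
      HasSum (fun j : ℕ => algebraMap ℚ_[p] C (c j : ℚ_[p]) * π ^ j) S ∧
      ‖S‖ = ‖π‖ ^ lam' := by
  set f : ℕ → C := fun j : ℕ => algebraMap ℚ_[p] C (c j : ℚ_[p]) * π ^ j with hf
  have hnf : ∀ j, ‖f j‖ = ‖c j‖ * ‖π‖ ^ j := by
    intro j
    simp [hf, norm_algebraMap']
  have hle : ∀ j, ‖f j‖ ≤ ‖π‖ ^ j := by
    intro j
    rw [hnf]
    exact mul_le_of_le_one_left (by positivity) (PadicInt.norm_le_one _)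
  have hsum : Summable f :=
    Summable.of_norm_bounded (summable_geometric_of_lt_one hπ0.le hπ1) hle
  obtain ⟨S, hS⟩ := hsum
  refine ⟨S, hS, ?_⟩
  have hmain : ‖f lam'‖ = ‖π‖ ^ lam' := by
    have h1 : ‖c lam'‖ = 1 := PadicInt.isUnit_iff.mp hlam'.1
    rw [hnf, h1, one_mul]
  set r : ℝ := max ((p : ℝ)⁻¹ * ‖π‖ ^ lam) (‖π‖ ^ (lam' + 1)) with hr
  have hrlt : r < ‖π‖ ^ lam' :=
    max_lt hgap (pow_lt_pow_right_of_lt_one₀ hπ0 hπ1 (Nat.lt_succ_self _))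
  have hr0 : 0 ≤ r := le_max_of_le_right (by positivity)
  have hp0 : (0 : ℝ) ≤ (p : ℝ)⁻¹ := by positivity
  have hbd : ∀ j, j ≠ lam' → ‖f j‖ ≤ r := by
    intro j hj
    rcases lt_or_gt_of_ne hj with h | h
    · by_cases h0 : c j = 0
      · rw [hnf, h0]
        simpa using hr0
      · have hlj : lam ≤ j := hlam.2 h0
        have hnu : ¬ IsUnit (c j) := fun hu => absurd (hlam'.2 hu) (not_le.mpr h)
        have hlt : ‖c j‖ < 1 :=
          lt_of_le_of_ne (PadicInt.norm_le_one _) (fun e => hnu (PadicInt.isUnit_iff.mpr e))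
        have hc : ‖c j‖ ≤ (p : ℝ)⁻¹ := by
          have := (PadicInt.norm_le_pow_iff_norm_lt_pow_add_one (c j) (-1)).mpr (by simpa using hlt)
          simpa using this
        rw [hnf]
        exact le_max_of_le_left (mul_le_mul hc
          (pow_le_pow_of_le_one hπ0.le hπ1.le hlj) (by positivity) hp0)
    · exact le_max_of_le_right ((hle j).trans (pow_le_pow_of_le_one hπ0.le hπ1.le h))
  have hdiff : ‖S - f lam'‖ ≤ r := by
    have h2 := hS.sub (hasSum_ite_eq lam' (f lam'))
    refine le_of_tendsto h2.norm (Filter.Eventually.of_forall fun s => ?_)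
    refine IsUltrametricDist.norm_sum_le_of_forall_le_of_nonneg hr0 fun j _ => ?_
    by_cases hj : j = lam'
    · subst hj
      simpa using hr0
    · simpa [hj] using hbd j hj
  have hlt : ‖S - f lam'‖ < ‖f lam'‖ := by
    rw [hmain]
    exact hdiff.trans_lt hrlt
  have h3 := IsUltrametricDist.norm_add_eq_max_of_norm_ne_norm hlt.ne
  rw [sub_add_cancel, max_eq_right hlt.le, hmain] at h3
  exact h3
end

section
/- Let p be a prime, let L = ℚ_p((T)) be the field of formal Laurent series over ℚ_p, let Ω be a fixed algebraic closure of L, and let d be a positive integer. Then the intermediate field of Ω/L generated by all elements x ∈ Ω whose degree over L is at most d (equivalently, by the roots of all irreducible polynomials over L of degree at most d) is a finite extension of L. -/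
open Polynomial

section PadicPart
variable {p : ℕ} [Fact p.Prime]

lemma bd_norm_eval_of_irreducible (E : IntermediateField ℚ_[p] (PadicAlgCl p))
    (g : E[X]) (hg : g.Monic) (hi : Irreducible g) (α : E) (β : PadicAlgCl p)
    (hβ : aeval β g = 0) :
    ‖(g.map (algebraMap E (PadicAlgCl p))).eval (α : PadicAlgCl p)‖
      = ‖(α : PadicAlgCl p) - β‖ ^ g.natDegree := by
  set G := g.map (algebraMap E (PadicAlgCl p)) with hG
  have hGm : G.Monic := hg.map _
  have hs : G.Splits := IsAlgClosed.splits G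
  have hcard : G.roots.card = g.natDegree := by
    rw [← hs.natDegree_eq_card_roots, hG, natDegree_map]
  have hprod := hs.eq_prod_roots_of_monic hGm
  have hall : ∀ γ ∈ G.roots, ‖(α : PadicAlgCl p) - γ‖ = ‖(α : PadicAlgCl p) - β‖ := by
    intro γ hγ
    have hγ0 : aeval γ g = 0 := by
      have := (mem_roots hGm.ne_zero).1 hγ
      rwa [IsRoot.def, hG, eval_map_algebraMap] at this
    have e1 := minpoly.eq_of_irreducible_of_monic hi hγ0 hg
    have e2 := minpoly.eq_of_irreducible_of_monic hi hβ hg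
    have : IsConjRoot E β γ := by rw [IsConjRoot, ← e1, ← e2]
    obtain ⟨σ, hσ⟩ := (isConjRoot_iff_exists_algEquiv).1 this
    have h1 : σ ((α : PadicAlgCl p) - γ) = α - β := by
      rw [map_sub, hσ]
      congr 1
      exact σ.commutes α
    rw [← h1]
    exact spectralNorm_eq_of_equiv (σ.restrictScalars ℚ_[p]) _
  have : G.eval (α : PadicAlgCl p) = (G.roots.map (fun γ => (α : PadicAlgCl p) - γ)).prod := by
    conv_lhs => rw [hprod]
    rw [eval_multiset_prod, Multiset.map_map]
    simp
  rw [this, ← hcard]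
  have h2 : ‖(G.roots.map (fun γ => (α : PadicAlgCl p) - γ)).prod‖
      = (G.roots.map (fun γ => ‖(α : PadicAlgCl p) - γ‖)).prod := by
    rw [← normHom_apply, map_multiset_prod, Multiset.map_map]
    rfl
  rw [h2]
  rw [Multiset.map_congr rfl hall]
  simp

lemma bd_factor (E : IntermediateField ℚ_[p] (PadicAlgCl p))
    (f : (PadicAlgCl p)[X]) (hf : f.Monic) (hc : ∀ i, f.coeff i ∈ E) (hd : 1 ≤ f.natDegree)
    (α₁ α₂ : PadicAlgCl p) (h1 : α₁ ∈ E) (h2 : α₂ ∈ E)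
    (b1 : ‖f.eval α₁‖ < ‖α₁ - α₂‖ ^ f.natDegree) (b2 : ‖f.eval α₂‖ < ‖α₁ - α₂‖ ^ f.natDegree) :
    ∃ g h : (PadicAlgCl p)[X], g.Monic ∧ h.Monic ∧ (∀ i, g.coeff i ∈ E) ∧ (∀ i, h.coeff i ∈ E) ∧
      g.natDegree < f.natDegree ∧ h.natDegree < f.natDegree ∧ f = g * h := by
  have hl : f ∈ Polynomial.lifts (algebraMap E (PadicAlgCl p)) := by
    rw [Polynomial.lifts_iff_coeff_lifts]
    intro n
    exact ⟨⟨_, hc n⟩, rfl⟩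
  obtain ⟨q, hq, hqd, hqm⟩ := Polynomial.lifts_and_natDegree_eq_and_monic hl hf
  have hni : ¬ Irreducible q := by
    intro hi
    obtain ⟨β, hβ⟩ := IsAlgClosed.exists_root f (by
      rw [Polynomial.degree_eq_natDegree hf.ne_zero]; norm_cast; omega)
    have hβ' : aeval β q = 0 := by rwa [IsRoot.def, ← hq, eval_map_algebraMap] at hβ
    have e1 := bd_norm_eval_of_irreducible E q hqm hi ⟨α₁, h1⟩ β hβ'
    have e2 := bd_norm_eval_of_irreducible E q hqm hi ⟨α₂, h2⟩ β hβ'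
    simp only [hq, hqd] at e1 e2
    rw [e1] at b1
    rw [e2] at b2
    have c1 := lt_of_pow_lt_pow_left₀ _ (norm_nonneg _) b1
    have c2 := lt_of_pow_lt_pow_left₀ _ (norm_nonneg _) b2
    have := PadicAlgCl.isNonarchimedean p (α₁ - β) (β - α₂)
    rw [sub_add_sub_cancel, norm_sub_rev β] at this
    exact absurd this (not_le.2 (max_lt c1 c2))
  have hq1 : q ≠ 1 := by rintro rfl; simp at hqd; omega
  rw [hqm.irreducible_iff_natDegree'] at hni
  push Not at hni
  obtain ⟨g, h, hg, hh, hgh, hm⟩ := hni hq1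
  rw [Finset.mem_Ioc] at hm
  have hdeg : g.natDegree + h.natDegree = q.natDegree := by rw [← hgh, hg.natDegree_mul hh]
  refine ⟨g.map (algebraMap E _), h.map (algebraMap E _), hg.map _, hh.map _, ?_, ?_, ?_, ?_, ?_⟩
  · intro i; rw [coeff_map]; exact (g.coeff i).2
  · intro i; rw [coeff_map]; exact (h.coeff i).2
  · rw [natDegree_map]; omega
  · rw [natDegree_map]; omega
  · rw [← Polynomial.map_mul, hgh, hq]

/-- the monic polynomial of degree `D` with given lower coefficients -/
noncomputable def bdPoly {K : Type*} [Field K] (D : ℕ) (a : Fin D → K) : K[X] :=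
  X ^ D + ∑ i : Fin D, C (a i) * X ^ (i : ℕ)

section bdPoly
variable {K : Type*} [Field K] (D : ℕ) (a : Fin D → K)

lemma bdPoly_aux : (∑ i : Fin D, C (a i) * X ^ (i : ℕ)).degree < (D : WithBot ℕ) := by
  exact Polynomial.degree_sum_fin_lt a

lemma bdPoly_monic : (bdPoly D a).Monic := monic_X_pow_add (bdPoly_aux D a)

lemma bdPoly_natDegree : (bdPoly D a).natDegree = D := by
  apply natDegree_eq_of_degree_eq_some
  rw [bdPoly, degree_add_eq_left_of_degree_lt] <;> simp [bdPoly_aux]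

lemma bdPoly_coeff (i : Fin D) : (bdPoly D a).coeff i = a i := by
  simp only [bdPoly, coeff_add, coeff_X_pow, finsetSum_coeff, coeff_C_mul]
  rw [if_neg (by omega), Finset.sum_eq_single i]
  · simp
  · intro b _ hb; rw [if_neg]; · simp
    intro h; exact hb (Fin.ext h.symm)
  · simp

lemma bdPoly_coeff_nat (i : ℕ) : (bdPoly D a).coeff i =
    if h : i < D then a ⟨i, h⟩ else if i = D then 1 else 0 := by
  split_ifs with h1 h2
  · exact bdPoly_coeff D a ⟨i, h1⟩
  · subst h2; have := bdPoly_monic i a; rwa [Monic, leadingCoeff, bdPoly_natDegree] at this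
  · apply coeff_eq_zero_of_natDegree_lt; rw [bdPoly_natDegree]; omega

lemma eq_bdPoly (f : K[X]) (hf : f.Monic) (hD : f.natDegree = D) :
    f = bdPoly D (fun i => f.coeff i) := by
  ext i
  rw [bdPoly_coeff_nat]
  split_ifs with h1 h2
  · rfl
  · subst h2; rw [← hD]; exact hf
  · apply coeff_eq_zero_of_natDegree_lt; omega

lemma bdPoly_eval (x : K) : (bdPoly D a).eval x = x ^ D + ∑ i : Fin D, a i * x ^ (i : ℕ) := by
  simp [bdPoly, eval_finsetSum]

end bdPoly

/-- A monic depressed polynomial which is not `X ^ D` has two distinct roots. -/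
lemma bd_two_roots {K : Type*} [Field K] [IsAlgClosed K] [CharZero K] (f : K[X]) (hf : f.Monic)
    (hD : 2 ≤ f.natDegree) (h0 : f.coeff (f.natDegree - 1) = 0)
    (i : ℕ) (hi : i < f.natDegree) (hne : f.coeff i ≠ 0) :
    ∃ a b : K, a ≠ b ∧ f.eval a = 0 ∧ f.eval b = 0 := by
  by_contra hcon
  push Not at hcon
  obtain ⟨a, ha⟩ := IsAlgClosed.exists_root f (by
      rw [Polynomial.degree_eq_natDegree hf.ne_zero]; norm_cast; omega)
  have hs : f.Splits := IsAlgClosed.splits f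
  have hall : ∀ b ∈ f.roots, b = a := by
    intro b hb
    by_contra hba
    exact hcon b a hba ((mem_roots hf.ne_zero).1 hb) ha
  have hr : f.roots = Multiset.replicate f.natDegree a := by
    rw [Multiset.eq_replicate]
    exact ⟨hs.natDegree_eq_card_roots.symm, hall⟩
  have hprod := hs.eq_prod_roots_of_monic hf
  rw [hr] at hprod
  simp only [Multiset.map_replicate, Multiset.prod_replicate] at hprod
  have hnext : f.nextCoeff = 0 := by
    rw [nextCoeff_of_natDegree_pos (by omega)]; exact h0
  have hz : a = 0 := by
    rw [hprod, (monic_X_sub_C a).nextCoeff_pow, nextCoeff_X_sub_C] at hnext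
    rw [nsmul_eq_mul, mul_eq_zero] at hnext
    rcases hnext with h | h
    · rw [Nat.cast_eq_zero] at h; omega
    · simpa using h
  rw [hz, C_0, sub_zero] at hprod
  apply hne
  rw [hprod, coeff_X_pow, if_neg (by omega)]

lemma bd_key (D : ℕ) (hD : 2 ≤ D) (F : IntermediateField ℚ_[p] (PadicAlgCl p))
    [FiniteDimensional ℚ_[p] F] :
    ∃ F₁ : IntermediateField ℚ_[p] (PadicAlgCl p), FiniteDimensional ℚ_[p] F₁ ∧ F ≤ F₁ ∧
      ∀ a : Fin D → F, (∀ i, ‖(a i : PadicAlgCl p)‖ ≤ 1) → a ⟨D - 1, by omega⟩ = 0 →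
        (∃ i : Fin D, ‖(p : ℚ_[p])‖ ^ (D - (i : ℕ)) ≤ ‖(a i : PadicAlgCl p)‖) →
        ∃ g h : (PadicAlgCl p)[X], g.Monic ∧ h.Monic ∧ (∀ i, g.coeff i ∈ F₁) ∧
          (∀ i, h.coeff i ∈ F₁) ∧ g.natDegree < D ∧ h.natDegree < D ∧
          bdPoly D (fun i => (a i : PadicAlgCl p)) = g * h := by
  have hprop : ProperSpace F := FiniteDimensional.proper ℚ_[p] F
  let N : Set (Fin D → F) := {a | (∀ i, ‖(a i : PadicAlgCl p)‖ ≤ 1) ∧ a ⟨D - 1, by omega⟩ = 0 ∧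
        (∃ i : Fin D, ‖(p : ℚ_[p])‖ ^ (D - (i : ℕ)) ≤ ‖(a i : PadicAlgCl p)‖)}
  have hcont : ∀ i, Continuous (fun a : Fin D → F => ‖(a i : PadicAlgCl p)‖) := by
    intro i
    exact continuous_norm.comp (continuous_subtype_val.comp (continuous_apply i))
  have hNc : IsCompact N := by
    apply Metric.isCompact_of_isClosed_isBounded
    · have e : N = (⋂ i, {a | ‖(a i : PadicAlgCl p)‖ ≤ 1}) ∩ ({a | a ⟨D - 1, by omega⟩ = 0} ∩
        ⋃ i : Fin D, {a | ‖(p : ℚ_[p])‖ ^ (D - (i : ℕ)) ≤ ‖(a i : PadicAlgCl p)‖}) := by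
        ext a; simp [N]
      rw [e]
      refine IsClosed.inter (isClosed_iInter fun i => isClosed_le (hcont i) continuous_const)
        (IsClosed.inter (isClosed_eq (continuous_apply _) continuous_const)
          (isClosed_iUnion_of_finite fun i => isClosed_le continuous_const (hcont i)))
    · refine (Metric.isBounded_closedBall (x := (0 : Fin D → F)) (r := 1)).subset ?_
      intro a ha
      rw [mem_closedBall_zero_iff, pi_norm_le_iff_of_nonneg zero_le_one]
      exact ha.1
  have main : ∃ F₁ : IntermediateField ℚ_[p] (PadicAlgCl p), FiniteDimensional ℚ_[p] F₁ ∧ F ≤ F₁ ∧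
      ∀ a ∈ N,
        ∃ g h : (PadicAlgCl p)[X], g.Monic ∧ h.Monic ∧ (∀ i, g.coeff i ∈ F₁) ∧
          (∀ i, h.coeff i ∈ F₁) ∧ g.natDegree < D ∧ h.natDegree < D ∧
          bdPoly D (fun i => (a i : PadicAlgCl p)) = g * h := by
    refine IsCompact.induction_on (p := fun s => ∃ F₁ : IntermediateField ℚ_[p] (PadicAlgCl p),
      FiniteDimensional ℚ_[p] F₁ ∧ F ≤ F₁ ∧ ∀ a ∈ s,
        ∃ g h : (PadicAlgCl p)[X], g.Monic ∧ h.Monic ∧ (∀ i, g.coeff i ∈ F₁) ∧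
          (∀ i, h.coeff i ∈ F₁) ∧ g.natDegree < D ∧ h.natDegree < D ∧
          bdPoly D (fun i => (a i : PadicAlgCl p)) = g * h) hNc ?_ ?_ ?_ ?_
    · exact ⟨F, inferInstance, le_rfl, by simp⟩
    · rintro s t hst ⟨F₁, h1, h2, h3⟩
      exact ⟨F₁, h1, h2, fun a ha => h3 a (hst ha)⟩
    · rintro s t ⟨F₁, h1, h2, h3⟩ ⟨F₂, k1, k2, k3⟩
      refine ⟨F₁ ⊔ F₂, IntermediateField.finiteDimensional_sup F₁ F₂, h2.trans le_sup_left, ?_⟩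
      rintro a (ha | ha)
      · obtain ⟨g, h, hg, hh, cg, ch, r⟩ := h3 a ha
        have l : F₁ ≤ F₁ ⊔ F₂ := le_sup_left
        exact ⟨g, h, hg, hh, fun i => l (cg i), fun i => l (ch i), r⟩
      · obtain ⟨g, h, hg, hh, cg, ch, r⟩ := k3 a ha
        have l : F₂ ≤ F₁ ⊔ F₂ := le_sup_right
        exact ⟨g, h, hg, hh, fun i => l (cg i), fun i => l (ch i), r⟩
    · intro a ha
      obtain ⟨ha1, ha2, i, hi⟩ := ha
      have hp0 : 0 < ‖(p : ℚ_[p])‖ := by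
        rw [norm_pos_iff, Nat.cast_ne_zero]; exact (Fact.out : p.Prime).ne_zero
      obtain ⟨α, β, hne, hα, hβ⟩ := bd_two_roots
        (bdPoly D (fun i => (a i : PadicAlgCl p))) (bdPoly_monic _ _)
        (by rw [bdPoly_natDegree]; exact hD)
        (by rw [bdPoly_natDegree]
            have := bdPoly_coeff D (fun i => (a i : PadicAlgCl p)) ⟨D - 1, by omega⟩
            simp only at this
            rw [this, ha2]; rfl) i (by rw [bdPoly_natDegree]; exact i.2)
        (by rw [bdPoly_coeff]
            intro h0
            rw [h0, norm_zero] at hi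
            exact absurd hi (not_le.2 (pow_pos hp0 _)))
      have hδ : 0 < ‖α - β‖ ^ D := pow_pos (norm_pos_iff.2 (sub_ne_zero.2 hne)) _
      have hcv : ∀ x : PadicAlgCl p, Continuous (fun b : Fin D → F =>
          ‖(bdPoly D (fun i => (b i : PadicAlgCl p))).eval x‖) := by
        intro x
        simp only [bdPoly_eval]
        refine continuous_norm.comp (continuous_const.add (continuous_finsetSum _ fun i _ => ?_))
        exact (continuous_subtype_val.comp (continuous_apply i)).mul continuous_const
      refine ⟨{b | ‖(bdPoly D (fun i => (b i : PadicAlgCl p))).eval α‖ < ‖α - β‖ ^ D} ∩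
        {b | ‖(bdPoly D (fun i => (b i : PadicAlgCl p))).eval β‖ < ‖α - β‖ ^ D}, ?_, ?_⟩
      · apply mem_nhdsWithin_of_mem_nhds
        refine IsOpen.mem_nhds (IsOpen.inter (isOpen_lt (hcv α) continuous_const)
          (isOpen_lt (hcv β) continuous_const)) ⟨?_, ?_⟩
        · simpa [hα] using hδ
        · simpa [hβ] using hδ
      · have hAlg : ∀ x : PadicAlgCl p, IsIntegral ℚ_[p] x := fun x =>
          (Algebra.IsAlgebraic.isAlgebraic x).isIntegral
        have i1 := IntermediateField.adjoin.finiteDimensional (hAlg α)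
        have i2 := IntermediateField.adjoin.finiteDimensional (hAlg β)
        refine ⟨(F ⊔ IntermediateField.adjoin ℚ_[p] {α}) ⊔ IntermediateField.adjoin ℚ_[p] {β},
          inferInstance, le_sup_left.trans le_sup_left, ?_⟩
        rintro b ⟨hb1, hb2⟩
        have hF : F ≤ (F ⊔ IntermediateField.adjoin ℚ_[p] {α}) ⊔
          IntermediateField.adjoin ℚ_[p] {β} := le_sup_left.trans le_sup_left
        have hA : IntermediateField.adjoin ℚ_[p] {α} ≤ (F ⊔ IntermediateField.adjoin ℚ_[p] {α}) ⊔
          IntermediateField.adjoin ℚ_[p] {β} := le_sup_right.trans le_sup_left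
        have hB : IntermediateField.adjoin ℚ_[p] {β} ≤ (F ⊔ IntermediateField.adjoin ℚ_[p] {α}) ⊔
          IntermediateField.adjoin ℚ_[p] {β} := le_sup_right
        have := bd_factor _ (bdPoly D (fun i => (b i : PadicAlgCl p))) (bdPoly_monic _ _)
          (fun j => by
            rw [bdPoly_coeff_nat]
            split_ifs
            · exact hF (b _).2
            · exact one_mem _
            · exact zero_mem _) (by rw [bdPoly_natDegree]; omega) α β
          (hA (IntermediateField.mem_adjoin_simple_self _ _))
          (hB (IntermediateField.mem_adjoin_simple_self _ _))
          (by rw [bdPoly_natDegree]; exact hb1) (by rw [bdPoly_natDegree]; exact hb2)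
        rwa [bdPoly_natDegree] at this
  obtain ⟨F₁, h1, h2, h3⟩ := main
  exact ⟨F₁, h1, h2, fun a x y z => h3 a ⟨x, y, z⟩⟩


/-- Tschirnhaus: killing the next-to-leading coefficient. -/
lemma bd_depress {K : Type*} [Field K] [CharZero K] (f : K[X]) (hf : f.Monic)
    (hD : 1 ≤ f.natDegree) :
    (taylor (-(f.coeff (f.natDegree - 1) / f.natDegree)) f).coeff (f.natDegree - 1) = 0 := by
  obtain ⟨n, hn⟩ : ∃ n, f.natDegree = n + 1 := ⟨f.natDegree - 1, by omega⟩
  rw [taylor_coeff, hn, Nat.add_sub_cancel]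
  have hdeg : (hasseDeriv n f).natDegree ≤ 1 := by
    refine (natDegree_hasseDeriv_le f n).trans ?_
    omega
  have hl : f.coeff (n + 1) = 1 := by rw [← hn]; exact hf
  rw [eval_eq_sum_range' (Nat.lt_succ_of_le hdeg)]
  simp only [Finset.sum_range_succ, Finset.sum_range_zero, hasseDeriv_coeff]
  have h0 : ((n + 1 : ℕ) : K) ≠ 0 := by norm_cast
  rw [show 1 + n = n + 1 by ring, hl]
  simp only [zero_add, Nat.choose_self, Nat.choose_succ_self_right]
  field_simp
  simp

lemma bd_scale_root {K : Type*} [Field K] (f : K[X]) (s x : K) (h : f.eval x = 0) :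
    (scaleRoots f s).eval (s * x) = 0 := by
  have := scaleRoots_eval₂_mul (p := f) (RingHom.id K) x s
  simp only [RingHom.id_apply] at this
  rw [eval₂_id, eval₂_id] at this
  rw [this, h, mul_zero]

lemma bd_choose_scale (D : ℕ) (a : Fin D → ℝ) (ha : ∀ i, 0 ≤ a i) (i₀ : Fin D) (hi₀ : 0 < a i₀)
    (y : ℝ) (hy : 1 < y) :
    ∃ n : ℤ, (∀ i, a i ≤ (y ^ n) ^ (D - (i : ℕ))) ∧
      ∃ i : Fin D, (y ^ n) ^ (D - (i : ℕ)) * (y⁻¹) ^ (D - (i : ℕ)) ≤ a i := by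
  let m : Fin D → ℝ := fun i => a i ^ (((D - (i : ℕ) : ℕ) : ℝ)⁻¹)
  have hm : ∀ i, m i ^ (D - (i : ℕ)) = a i := fun i =>
    Real.rpow_inv_natCast_pow (ha i) (by omega)
  have hm0 : ∀ i, 0 ≤ m i := fun i => Real.rpow_nonneg (ha i) _
  obtain ⟨j, -, hj⟩ := Finset.exists_max_image Finset.univ m ⟨i₀, Finset.mem_univ _⟩
  have hj0 : 0 < m j := lt_of_lt_of_le (Real.rpow_pos_of_pos hi₀ _) (hj i₀ (Finset.mem_univ _))
  obtain ⟨n, hn1, hn2⟩ := exists_mem_Ioc_zpow hj0 hy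
  refine ⟨n + 1, fun i => ?_, j, ?_⟩
  · rw [← hm i]
    exact pow_le_pow_left₀ (hm0 i) ((hj i (Finset.mem_univ _)).trans hn2) _
  · rw [← hm j, ← mul_pow]
    have hy0 : y ≠ 0 := by positivity
    refine pow_le_pow_left₀ (by positivity) ?_ _
    rw [zpow_add_one₀ hy0, mul_assoc, mul_inv_cancel₀ hy0, mul_one]
    exact hn1.le

theorem bd_padic (d : ℕ) : ∀ F : IntermediateField ℚ_[p] (PadicAlgCl p),
    FiniteDimensional ℚ_[p] F →
    ∃ F₁ : IntermediateField ℚ_[p] (PadicAlgCl p), FiniteDimensional ℚ_[p] F₁ ∧ F ≤ F₁ ∧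
      ∀ f : (PadicAlgCl p)[X], f.Monic → f.natDegree ≤ d → (∀ i, f.coeff i ∈ F) →
        ∀ x, f.eval x = 0 → x ∈ F₁ := by
  induction d with
  | zero =>
    intro F hF
    refine ⟨F, hF, le_rfl, ?_⟩
    intro f hf hd _ x hx
    have : f = 1 := hf.natDegree_eq_zero.1 (by omega)
    rw [this] at hx
    simp at hx
  | succ d ih =>
    intro F hF
    rcases Nat.eq_zero_or_pos d with rfl | hd0
    · refine ⟨F, hF, le_rfl, ?_⟩
      intro f hf hd hc x hx
      rcases Nat.lt_or_ge f.natDegree 1 with h | h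
      · have : f = 1 := hf.natDegree_eq_zero.1 (by omega)
        rw [this] at hx
        simp at hx
      · have h1 : f.natDegree = 1 := by omega
        have := eq_bdPoly 1 f hf h1
        rw [this, bdPoly_eval] at hx
        simp at hx
        rw [eq_neg_of_add_eq_zero_left hx]
        exact neg_mem (hc 0)
    · obtain ⟨F₁, hF₁, hle, hkey⟩ := bd_key (p := p) (d + 1) (by omega) F
      obtain ⟨F₂, hF₂, hle₂, h2⟩ := ih F₁ hF₁
      refine ⟨F₂, hF₂, hle.trans hle₂, ?_⟩
      intro f hf hd hc x hx
      rcases Nat.lt_or_ge f.natDegree (d + 1) with h | h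
      · exact h2 f hf (by omega) (fun i => hle (hc i)) x hx
      have hfd : f.natDegree = d + 1 := by omega
      have hl : f ∈ Polynomial.lifts (algebraMap F (PadicAlgCl p)) := by
        rw [Polynomial.lifts_iff_coeff_lifts]
        intro n
        exact ⟨⟨_, hc n⟩, rfl⟩
      obtain ⟨q, hq, hqd, hqm⟩ := Polynomial.lifts_and_natDegree_eq_and_monic hl hf
      have hcz : CharZero F := inferInstance
      have hdep := bd_depress q hqm (by omega)
      set c : F := q.coeff (q.natDegree - 1) / q.natDegree with hcdef
      set g : F[X] := taylor (-c) q with hg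
      have hgm : g.Monic := by rw [Monic, hg, leadingCoeff_taylor]; exact hqm
      have hgd : g.natDegree = d + 1 := by rw [hg, natDegree_taylor, hqd, hfd]
      have hgd0 : g.coeff d = 0 := by
        rw [hqd, hfd] at hdep; exact hdep
      have hgx : (g.map (algebraMap F (PadicAlgCl p))).eval (x + c) = 0 := by
        rw [hg, taylor_apply, Polynomial.map_comp, hq, eval_comp]
        simp
        exact hx
      suffices x + (c : PadicAlgCl p) ∈ F₂ by
        have h3 := sub_mem this (hle₂ (hle c.2))
        simpa using h3
      by_cases hz : ∀ i : Fin (d + 1), g.coeff i = 0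
      · have hgX : g = X ^ (d + 1) := by
          rw [eq_bdPoly (d + 1) g hgm hgd, bdPoly]
          simp [hz]
        rw [hgX] at hgx
        simp at hgx
        rw [hgx]; exact zero_mem _
      push Not at hz
      obtain ⟨i₀, hi₀⟩ := hz
      have hp1 : (1 : ℝ) < p := by exact_mod_cast (Fact.out : p.Prime).one_lt
      obtain ⟨n, hn1, j, hn2⟩ := bd_choose_scale (d + 1)
        (fun i => ‖(g.coeff i : PadicAlgCl p)‖) (fun i => norm_nonneg _) i₀
        (by rw [norm_pos_iff]; simpa using hi₀) p hp1
      have hpF : ‖((p : F) : PadicAlgCl p)‖ = (p : ℝ)⁻¹ := by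
        have h4 := PadicAlgCl.norm_extends p (p : ℚ_[p])
        rw [Padic.norm_p] at h4
        rw [← h4]
        simp
      have hpF0 : (p : F) ≠ 0 := Nat.cast_ne_zero.2 (Fact.out : p.Prime).ne_zero
      set s : F := (p : F) ^ n with hs
      have hs0 : s ≠ 0 := zpow_ne_zero _ hpF0
      have hsn : ‖(s : PadicAlgCl p)‖ = ((p : ℝ) ^ n)⁻¹ := by
        rw [hs, ← inv_zpow, ← hpF, ← norm_zpow]
        norm_cast
      set b : Fin (d + 1) → F := fun i => (scaleRoots g s).coeff i with hb
      have hbi : ∀ i : Fin (d + 1), ‖(b i : PadicAlgCl p)‖ =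
          ‖(g.coeff i : PadicAlgCl p)‖ * (((p : ℝ) ^ n)⁻¹) ^ (d + 1 - (i : ℕ)) := by
        intro i
        rw [hb]
        simp only [coeff_scaleRoots, hgd]
        rw [← hsn, ← norm_pow, ← norm_mul]
        norm_cast
      have hpn : (0 : ℝ) < (p : ℝ) ^ n := by positivity
      obtain ⟨u, v, hu, hv, cu, cv, du, dv, huv⟩ := hkey b
        (fun i => by
          rw [hbi, inv_pow, ← div_eq_mul_inv, div_le_one (by positivity)]
          exact hn1 i)
        (by
          rw [hb]
          simp only [coeff_scaleRoots, Nat.add_sub_cancel, hgd0, zero_mul])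
        ⟨j, by
          rw [hbi, inv_pow ((p : ℝ) ^ n), ← div_eq_mul_inv, le_div_iff₀ (by positivity), mul_comm,
            Padic.norm_p]
          exact hn2⟩
      have hroot : (bdPoly (d + 1) (fun i => (b i : PadicAlgCl p))).eval (s * (x + c)) = 0 := by
        have e : bdPoly (d + 1) (fun i => (b i : PadicAlgCl p)) =
            scaleRoots (g.map (algebraMap F (PadicAlgCl p))) s := by
          rw [eq_bdPoly (d + 1) (scaleRoots (g.map (algebraMap F (PadicAlgCl p))) s)
            ((monic_scaleRoots_iff _).2 (hgm.map _)) (by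
              rw [natDegree_scaleRoots, natDegree_map, hgd])]
          congr 1
          ext i
          rw [hb]
          simp only [coeff_scaleRoots, natDegree_map, coeff_map]
          norm_cast
        rw [e]
        exact bd_scale_root _ _ _ hgx
      rw [huv, eval_mul, mul_eq_zero] at hroot
      have hmem : (s : PadicAlgCl p) * (x + c) ∈ F₂ := by
        rcases hroot with hr | hr
        · exact h2 u hu (by omega) cu _ hr
        · exact h2 v hv (by omega) cv _ hr
      have hs0' : (s : PadicAlgCl p) ≠ 0 := by simpa using hs0
      have h5 := mul_mem (inv_mem (hle₂ (hle s.2))) hmem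
      rwa [inv_mul_cancel_left₀ hs0'] at h5

end PadicPart

section LaurentPart

lemma bd_finite_of_span {A B : Type*} [CommRing A] [CommRing B] (f : A →+* B) {n : ℕ}
    (v : Fin n → B) (h : ∀ b, ∃ c : Fin n → A, b = ∑ i, f (c i) * v i) : f.Finite := by
  classical
  let := f.toAlgebra
  refine ⟨⟨Finset.univ.image v, ?_⟩⟩
  rw [eq_top_iff]
  rintro b -
  obtain ⟨c, rfl⟩ := h b
  refine Submodule.sum_mem _ fun i _ => ?_
  have : f (c i) * v i = c i • v i := rfl
  rw [this]
  exact Submodule.smul_mem _ _ (Submodule.subset_span (by simp))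

lemma bd_span_of_finite {A B : Type*} [CommRing A] [CommRing B] (f : A →+* B) (hf : f.Finite) :
    ∃ (n : ℕ) (v : Fin n → B), ∀ b, ∃ c : Fin n → A, b = ∑ i, f (c i) * v i := by
  let := f.toAlgebra
  have : Module.Finite A B := hf
  obtain ⟨n, v, hv⟩ := Module.Finite.exists_fin (R := A) (M := B)
  refine ⟨n, v, fun b => ?_⟩
  have : b ∈ Submodule.span A (Set.range v) := hv ▸ Submodule.mem_top
  obtain ⟨c, hc⟩ := (Submodule.mem_span_range_iff_exists_fun A).1 this
  exact ⟨c, hc.symm⟩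

variable {F F₁ : Type*} [Field F] [Field F₁]

/-- Coefficientwise map of Laurent series. -/
noncomputable def bdMap (ι : F →+* F₁) : LaurentSeries F →+* LaurentSeries F₁ where
  toFun x := HahnSeries.map x ι
  map_one' := HahnSeries.map_one ι.toMonoidWithZeroHom
  map_zero' := by ext; simp
  map_mul' x y := HahnSeries.map_mul ι.toNonUnitalRingHom
  map_add' x y := by ext; simp

lemma bdMap_coeff (ι : F →+* F₁) (x : LaurentSeries F) (n : ℤ) :
    (bdMap ι x).coeff n = ι (x.coeff n) := rfl

/-- The substitution `T = S ^ m`. -/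
noncomputable def bdEmb (F : Type*) [Field F] (m : ℕ) (hm : 0 < m) :
    LaurentSeries F →+* LaurentSeries F :=
  HahnSeries.embDomainRingHom (AddMonoidHom.mulLeft (m : ℤ))
    (fun a b h => by
      have : (m : ℤ) ≠ 0 := by exact_mod_cast hm.ne'
      exact mul_left_cancel₀ this h)
    (fun a b => by
      have : (0 : ℤ) < m := by exact_mod_cast hm
      exact mul_le_mul_iff_right₀ this)

lemma bdEmb_coeff (m : ℕ) (hm : 0 < m) (x : LaurentSeries F) (n : ℤ) :
    (bdEmb F m hm x).coeff (m * n) = x.coeff n := by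
  exact HahnSeries.embDomain_coeff (f := ⟨⟨AddMonoidHom.mulLeft (m : ℤ), _⟩, _⟩) (a := n)

lemma bdEmb_coeff_of_not_dvd (m : ℕ) (hm : 0 < m) (x : LaurentSeries F) (n : ℤ)
    (h : ¬ (m : ℤ) ∣ n) : (bdEmb F m hm x).coeff n = 0 := by
  refine HahnSeries.embDomain_of_notMem_range ?_
  rintro ⟨k, hk⟩
  exact h ⟨k, hk.symm⟩

lemma bdMap_finite (ι : F →+* F₁) (hι : ι.Finite) : (bdMap ι).Finite := by
  classical
  obtain ⟨n, v, hv⟩ := bd_span_of_finite ι hι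
  have hv' : ∃ c : F₁ → Fin n → F, (∀ b, b = ∑ i, ι (c b i) * v i) ∧ c 0 = 0 := by
    choose c hc using hv
    refine ⟨fun b => if b = 0 then 0 else c b, fun b => ?_, by simp⟩
    by_cases hb : b = 0
    · simp [hb]
    · simp only [hb, if_false]; exact hc b
  obtain ⟨c, hc, hc0⟩ := hv'
  refine bd_finite_of_span _ (fun i => HahnSeries.single 0 (v i)) fun b => ?_
  refine ⟨fun i => ⟨fun k => c (b.coeff k) i, b.isPWO_support.mono ?_⟩, ?_⟩
  · intro k hk
    rw [Function.mem_support] at hk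
    rw [HahnSeries.mem_support]
    intro h0
    rw [h0, hc0] at hk
    exact hk rfl
  · ext k
    rw [HahnSeries.coeff_sum]
    simp only [HahnSeries.coeff_mul_single_zero, bdMap_coeff]
    exact hc _

lemma bdEmb_finite (m : ℕ) (hm : 0 < m) : (bdEmb F m hm).Finite := by
  refine bd_finite_of_span (n := m) _ (fun i => HahnSeries.single (i : ℤ) 1) fun b => ?_
  have hm' : (0 : ℤ) < m := by exact_mod_cast hm
  have hbd : ∀ i : Fin m, BddBelow (Function.support fun k : ℤ => b.coeff (m * k + i)) := by
    intro i
    refine ⟨-|b.order| - 1, fun k hk => ?_⟩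
    rw [Function.mem_support] at hk
    have h1 := HahnSeries.order_le_of_coeff_ne_zero hk
    have h2 : ((i : ℕ) : ℤ) < m := by exact_mod_cast i.2
    have h3 := neg_abs_le b.order
    by_contra hlt
    push Not at hlt
    have h5 : 0 ≤ |b.order| := abs_nonneg _
    have h4 : (m : ℤ) * k ≤ m * (-|b.order| - 2) := by
      apply mul_le_mul_of_nonneg_left _ hm'.le
      omega
    nlinarith
  refine ⟨fun i => HahnSeries.ofSuppBddBelow (fun k : ℤ => b.coeff (m * k + i)) (hbd i), ?_⟩
  ext k
  rw [HahnSeries.coeff_sum]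
  simp only [HahnSeries.coeff_mul_single, mul_one]
  have hr0 := Int.emod_nonneg k hm'.ne'
  have hr1 := Int.emod_lt_of_pos k hm'
  have hr2 := Int.mul_ediv_add_emod k m
  rw [Finset.sum_eq_single (⟨(k % m).toNat, by omega⟩ : Fin m)]
  · have e : k - ((k % m).toNat : ℤ) = m * (k / m) := by omega
    simp only
    rw [e, bdEmb_coeff]
    simp only [HahnSeries.coeff_ofSuppBddBelow]
    congr 1
    omega
  · intro i _ hi
    apply bdEmb_coeff_of_not_dvd
    rintro ⟨t, ht⟩
    apply hi
    ext
    simp only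
    have : k = i + m * t := by omega
    rw [this, Int.add_mul_emod_self_left, Int.emod_eq_of_lt (by omega) (by have := i.2; omega)]
    simp
  · simp

/-- Factoring over a power series ring. -/
lemma bd_hensel (f : (PowerSeries F)[X]) (hf : f.Monic)
    (h0 : PowerSeries.constantCoeff (f.coeff 0) = 0)
    (hne : f.map (PowerSeries.constantCoeff (R := F)) ≠ X ^ f.natDegree) :
    ∃ u v : (PowerSeries F)[X], u.Monic ∧ v.Monic ∧ u.natDegree < f.natDegree ∧
      v.natDegree < f.natDegree ∧ f = u * v := by
  have hAC : IsAdicComplete (IsLocalRing.maximalIdeal (PowerSeries F)) (PowerSeries F) := by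
    rw [PowerSeries.maximalIdeal_eq_span_X]; infer_instance
  have hmem : ∀ a : PowerSeries F, a ∈ IsLocalRing.maximalIdeal (PowerSeries F) ↔
      PowerSeries.constantCoeff a = 0 := by
    intro a
    rw [PowerSeries.maximalIdeal_eq_span_X, Ideal.mem_span_singleton, PowerSeries.X_dvd_iff]
  have hg : (f : PowerSeries (PowerSeries F)).map (IsLocalRing.residue (PowerSeries F)) ≠ 0 := by
    intro h
    have := congrArg (PowerSeries.coeff f.natDegree) h
    rw [PowerSeries.coeff_map, Polynomial.coeff_coe, hf.coeff_natDegree] at this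
    simp at this
  obtain ⟨P, u, hPu⟩ := PowerSeries.exists_isWeierstrassFactorization hg
  have hP := hPu.isDistinguishedAt
  have hPm : P.Monic := hP.monic
  have hdiv : f = P * (f /ₘ P) := by
    have h1 : f %ₘ P + P * (f /ₘ P) = f := modByMonic_add_div f P
    have hW := hP.isWeierstrassDivisorAt'
    have hord : ((P : PowerSeries (PowerSeries F)).map (Ideal.Quotient.mk
        (IsLocalRing.maximalIdeal (PowerSeries F)))).order.toNat = P.natDegree := by
      have := hP.coe_natDegree_eq_order_map P 1
        (by rw [map_one, hmem]; simp) (by simp)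
      rw [← this]; rfl
    have h2 := hW.eq_of_mul_add_eq_mul_add (q := u) (q' := ((f /ₘ P : (PowerSeries F)[X]) : PowerSeries (PowerSeries F)))
      (r := 0) (r' := f %ₘ P) (by rw [hord]; simp)
      (by
        rw [hord, ← degree_eq_natDegree hPm.ne_zero]
        exact degree_modByMonic_lt f hPm)
      (by
        rw [Polynomial.coe_zero, add_zero, ← hPu.eq_mul, ← Polynomial.coe_mul,
          ← Polynomial.coe_add, add_comm, h1])
    rw [← h2.2, zero_add] at h1
    exact h1.symm
  have hQm : (f /ₘ P).Monic := by
    have := hf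
    rw [hdiv] at this
    exact hPm.of_mul_monic_left this
  have hdeg : f.natDegree = P.natDegree + (f /ₘ P).natDegree := by
    conv_lhs => rw [hdiv]
    exact hPm.natDegree_mul hQm
  refine ⟨P, f /ₘ P, hPm, hQm, ?_, ?_, hdiv⟩
  · by_contra hlt
    have hq : f /ₘ P = 1 := hQm.natDegree_eq_zero.1 (by omega)
    rw [hq, mul_one] at hdiv
    apply hne
    ext i
    rw [coeff_map, coeff_X_pow]
    split_ifs with hi
    · rw [hi, hf.coeff_natDegree, map_one]
    · rcases lt_or_gt_of_ne hi with hi | hi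
      · rw [← hmem, hdiv]
        rw [hdiv] at hi
        exact hP.mem hi
      · rw [coeff_eq_zero_of_natDegree_lt hi, map_zero]
  · by_contra hlt
    have hp1 : P = 1 := hPm.natDegree_eq_zero.1 (by omega)
    have hu := hPu.eq_mul
    rw [hp1, Polynomial.coe_one, one_mul] at hu
    have hun := hPu.isUnit
    rw [← hu, PowerSeries.isUnit_iff_constantCoeff, Polynomial.constantCoeff_coe,
      PowerSeries.isUnit_iff_constantCoeff, h0] at hun
    exact not_isUnit_zero hun

/-- A nontrivial monic factorization. -/
def BdRed {K : Type*} [Field K] (f : K[X]) : Prop :=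
  ∃ u v : K[X], u.Monic ∧ v.Monic ∧ u.natDegree < f.natDegree ∧
      v.natDegree < f.natDegree ∧ f = u * v

lemma BdRed.of_taylor {K : Type*} [Field K] (f : K[X]) (r : K) (h : BdRed (taylor r f)) :
    BdRed f := by
  obtain ⟨u, v, hu, hv, du, dv, huv⟩ := h
  rw [natDegree_taylor] at du dv
  refine ⟨taylor (-r) u, taylor (-r) v, ?_, ?_, ?_, ?_, ?_⟩
  · rw [Monic, leadingCoeff_taylor]; exact hu
  · rw [Monic, leadingCoeff_taylor]; exact hv
  · rwa [natDegree_taylor]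
  · rwa [natDegree_taylor]
  · rw [← taylor_mul, ← huv, taylor_taylor]; simp

lemma BdRed.of_scale {K : Type*} [Field K] (f : K[X]) (s : K) (hs : s ≠ 0)
    (h : BdRed (scaleRoots f s)) : BdRed f := by
  obtain ⟨u, v, hu, hv, du, dv, huv⟩ := h
  rw [natDegree_scaleRoots] at du dv
  refine ⟨scaleRoots u s⁻¹, scaleRoots v s⁻¹, (monic_scaleRoots_iff _).2 hu,
    (monic_scaleRoots_iff _).2 hv, ?_, ?_, ?_⟩
  · rwa [natDegree_scaleRoots]
  · rwa [natDegree_scaleRoots]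
  · rw [← mul_scaleRoots_of_noZeroDivisors, ← huv, ← scaleRoots_mul, mul_inv_cancel₀ hs,
      scaleRoots_one]

lemma BdRed.X_pow {K : Type*} [Field K] (D : ℕ) (hD : 2 ≤ D) : BdRed (X ^ D : K[X]) := by
  refine ⟨X, X ^ (D - 1), monic_X, monic_X_pow _, ?_, ?_, ?_⟩
  · simp; omega
  · simp; omega
  · rw [← pow_succ']; congr 1; omega

lemma bd_laurent_step [CharZero F] (ι : F →+* F₁) (D : ℕ) (hD : 2 ≤ D)
    (hroots : ∀ f : F[X], f.Monic → f.natDegree = D → f.coeff (D - 1) = 0 →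
      (∃ i < D, f.coeff i ≠ 0) →
      ∃ a b : F₁, a ≠ b ∧ (f.map ι).eval a = 0 ∧ (f.map ι).eval b = 0)
    (f : (LaurentSeries F)[X]) (hf : f.Monic) (hfD : f.natDegree = D) :
    BdRed (f.map ((bdEmb F₁ D.factorial D.factorial_pos).comp (bdMap ι))) := by
  classical
  set m := D.factorial with hm
  have hm0 : 0 < m := D.factorial_pos
  have hcz : CharZero (LaurentSeries F) :=
    charZero_of_injective_ringHom (HahnSeries.C_injective (Γ := ℤ) (R := F))
  set ψ := (bdEmb F₁ m D.factorial_pos).comp (bdMap ι) with hψ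
  have hψc : ∀ (x : LaurentSeries F) (q : ℤ), (ψ x).coeff (m * q) = ι (x.coeff q) := by
    intro x q
    rw [hψ, RingHom.comp_apply, bdEmb_coeff, bdMap_coeff]
  have hψn : ∀ (x : LaurentSeries F) (q : ℤ), ¬ (m : ℤ) ∣ q → (ψ x).coeff q = 0 := by
    intro x q hq
    rw [hψ, RingHom.comp_apply, bdEmb_coeff_of_not_dvd _ _ _ _ hq]
  have hdep := bd_depress f hf (by omega)
  rw [hfD] at hdep
  generalize -(f.coeff (D - 1) / (D : LaurentSeries F)) = c at hdep
  set g := taylor c f with hg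
  have hgm : g.Monic := by rw [Monic, hg, leadingCoeff_taylor]; exact hf
  have hgd : g.natDegree = D := by rw [hg, natDegree_taylor, hfD]
  apply BdRed.of_taylor _ (ψ c)
  rw [← map_taylor, ← hg]
  by_cases hz : ∀ i : Fin D, g.coeff i = 0
  · have hgX : g = X ^ D := by
      rw [eq_bdPoly D g hgm hgd, bdPoly]
      simp [hz]
    rw [hgX, Polynomial.map_pow, map_X]
    exact BdRed.X_pow D hD
  push Not at hz
  obtain ⟨i₀, hi₀⟩ := hz
  let kk : Fin D → ℤ := fun i => ((m / (D - (i : ℕ)) : ℕ) : ℤ) * (g.coeff i).order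
  have hkk : ∀ i : Fin D, ((D - (i : ℕ) : ℕ) : ℤ) * kk i = m * (g.coeff i).order := by
    intro i
    have : (D - (i : ℕ)) * (m / (D - (i : ℕ))) = m :=
      Nat.mul_div_cancel' (Nat.dvd_factorial (by omega) (by omega))
    simp only [kk]
    rw [← mul_assoc]
    congr 1
    exact_mod_cast this
  obtain ⟨j, hj, hjmin⟩ := Finset.exists_min_image
    (Finset.univ.filter fun i : Fin D => g.coeff i ≠ 0) kk ⟨i₀, by simpa using hi₀⟩
  rw [Finset.mem_filter] at hj
  set n := kk j with hn
  set s : LaurentSeries F₁ := HahnSeries.single (-n) 1 with hs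
  have hs0 : s ≠ 0 := by rw [hs, Ne, HahnSeries.single_eq_zero_iff]; exact one_ne_zero
  apply BdRed.of_scale _ s hs0
  set h := scaleRoots (g.map ψ) s with hh
  have hhm : h.Monic := (monic_scaleRoots_iff _).2 (hgm.map _)
  have hhd : h.natDegree = D := by rw [hh, natDegree_scaleRoots, natDegree_map, hgd]
  have hhc : ∀ (i : ℕ) (t : ℤ), (h.coeff i).coeff t =
      (ψ (g.coeff i)).coeff (t + ((D - i : ℕ) : ℤ) * n) := by
    intro i t
    rw [hh, coeff_scaleRoots, natDegree_map, hgd, coeff_map, hs, HahnSeries.single_pow, one_pow,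
      HahnSeries.coeff_mul_single, mul_one]
    congr 1
    rw [nsmul_eq_mul]; ring
  have hintg : ∀ (i : ℕ) (t : ℤ), t < 0 → (h.coeff i).coeff t = 0 := by
    intro i t ht
    rcases lt_trichotomy i D with hi | hi | hi
    · rw [hhc]
      by_contra hne
      by_cases hdvd : (m : ℤ) ∣ t + ((D - i : ℕ) : ℤ) * n
      · obtain ⟨q, hq⟩ := hdvd
        rw [hq, hψc] at hne
        have hne' : (g.coeff i).coeff q ≠ 0 := fun h0 => hne (by rw [h0, map_zero])
        have hgi : g.coeff i ≠ 0 := HahnSeries.ne_zero_of_coeff_ne_zero hne'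
        have h1 := HahnSeries.order_le_of_coeff_ne_zero hne'
        have h2 := hjmin ⟨i, hi⟩ (by simpa using hgi)
        have h3 := hkk ⟨i, hi⟩
        simp only at h3
        have h4 : (m : ℤ) * (g.coeff i).order ≤ m * q := mul_le_mul_of_nonneg_left h1 (by positivity)
        have h5 : ((D - i : ℕ) : ℤ) * n ≤ ((D - i : ℕ) : ℤ) * kk ⟨i, hi⟩ :=
          mul_le_mul_of_nonneg_left h2 (by positivity)
        omega
      · exact hne (hψn _ _ hdvd)
    · rw [hi, ← hhd, hhm.coeff_natDegree, HahnSeries.coeff_one, if_neg (by omega)]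
    · rw [coeff_eq_zero_of_natDegree_lt (by omega), HahnSeries.coeff_zero]
  have hl : h ∈ Polynomial.lifts (HahnSeries.ofPowerSeries ℤ F₁) := by
    rw [Polynomial.lifts_iff_coeff_lifts]
    intro i
    refine ⟨PowerSeries.mk fun t => (h.coeff i).coeff t, ?_⟩
    ext t
    have := PowerSeries.coeff_coe (PowerSeries.mk fun t : ℕ => (h.coeff i).coeff t) t
    rw [this]
    split_ifs with ht
    · exact (hintg i t ht).symm
    · rw [PowerSeries.coeff_mk]
      congr 1
      omega
  obtain ⟨H, hH, hHd, hHm⟩ := Polynomial.lifts_and_natDegree_eq_and_monic hl hhm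
  have hHc : ∀ i, PowerSeries.constantCoeff (H.coeff i) = (h.coeff i).coeff 0 := by
    intro i
    rw [← hH, coeff_map]
    have := PowerSeries.coeff_coe (H.coeff i) 0
    rw [this]
    simp
  let e : Fin D → F := fun i => if (m : ℤ) ∣ ((D - (i : ℕ) : ℕ) : ℤ) * n then
    (g.coeff i).coeff (((D - (i : ℕ) : ℕ) : ℤ) * n / m) else 0
  have he : ∀ i : Fin D, ι (e i) = (h.coeff i).coeff 0 := by
    intro i
    rw [hhc, zero_add]
    simp only [e]
    split_ifs with hd
    · obtain ⟨q, hq⟩ := hd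
      rw [hq, hψc, Int.mul_ediv_cancel_left]
      exact_mod_cast hm0.ne'
    · rw [hψn _ _ hd, map_zero]
  have hE : (bdPoly D e).map ι = H.map (PowerSeries.constantCoeff (R := F₁)) := by
    ext i
    rw [coeff_map, coeff_map, bdPoly_coeff_nat, hHc]
    split_ifs with h1 h2
    · exact he ⟨i, h1⟩
    · rw [h2, ← hhd, hhm.coeff_natDegree]; simp
    · rw [coeff_eq_zero_of_natDegree_lt (by omega)]; simp
  obtain ⟨a, b, hab, ha, hb⟩ := hroots (bdPoly D e) (bdPoly_monic _ _) (bdPoly_natDegree _ _)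
    (by
      have h1 := bdPoly_coeff D e ⟨D - 1, by omega⟩
      simp only at h1
      rw [h1]
      simp only [e]
      rw [hdep]; simp)
    ⟨j, j.2, by
      rw [bdPoly_coeff]
      intro h0
      have h1 := he j
      have h2 := hkk j
      rw [h0, map_zero, hhc, zero_add, hn, h2, hψc] at h1
      have h3 := (map_eq_zero ι).1 h1.symm
      exact hj.2 (HahnSeries.coeff_order_eq_zero.1 h3)⟩
  rw [hE] at ha hb
  set H' := taylor (PowerSeries.C a) H with hH'
  have hH'm : H'.Monic := by rw [Monic, hH', leadingCoeff_taylor]; exact hHm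
  have hH'd : H'.natDegree = D := by rw [hH', natDegree_taylor, hHd, hhd]
  have hmap : H'.map (PowerSeries.constantCoeff (R := F₁)) =
      taylor a (H.map (PowerSeries.constantCoeff (R := F₁))) := by
    rw [hH', map_taylor, PowerSeries.constantCoeff_C]
  obtain ⟨u, v, hu, hv, du, dv, huv⟩ := bd_hensel H' hH'm
    (by rw [← coeff_map, hmap, taylor_coeff_zero, ha])
    (by
      rw [hmap, hH'd]
      intro h1
      have h2 := congrArg (eval (b - a)) h1
      rw [taylor_eval, sub_add_cancel, hb, eval_pow, eval_X] at h2
      exact hab (sub_eq_zero.1 (pow_eq_zero_iff (by omega) |>.1 h2.symm)).symm)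
  apply BdRed.of_taylor _ (HahnSeries.ofPowerSeries ℤ F₁ (PowerSeries.C a))
  rw [← hH, ← map_taylor, ← hH']
  refine ⟨u.map (HahnSeries.ofPowerSeries ℤ F₁), v.map (HahnSeries.ofPowerSeries ℤ F₁),
    hu.map (HahnSeries.ofPowerSeries ℤ F₁), hv.map (HahnSeries.ofPowerSeries ℤ F₁), ?_, ?_, ?_⟩
  · rw [hu.natDegree_map, hH'm.natDegree_map]; exact du
  · rw [hv.natDegree_map, hH'm.natDegree_map]; exact dv
  · rw [huv, Polynomial.map_mul]

/-- All monic polynomials of degree at most `d` split in some finite extension. -/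
def BdSplit (d : ℕ) (L : Type) [Field L] : Prop :=
  ∃ (M : Type) (_ : Field M) (φ : L →+* M), φ.Finite ∧
    ∀ f : L[X], f.Monic → f.natDegree ≤ d → (f.map φ).Splits

lemma bd_laurent (p : ℕ) [Fact p.Prime] (d : ℕ) :
    ∀ F : IntermediateField ℚ_[p] (PadicAlgCl p),
    FiniteDimensional ℚ_[p] F → BdSplit d (LaurentSeries F) := by
  induction d with
  | zero =>
    intro F hF
    refine ⟨LaurentSeries F, inferInstance, RingHom.id _, RingHom.Finite.id _, ?_⟩
    intro f hf hd
    rw [Polynomial.map_id]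
    exact Splits.of_natDegree_le_one (by omega)
  | succ d ih =>
    intro F hF
    rcases Nat.eq_zero_or_pos d with rfl | hd0
    · refine ⟨LaurentSeries F, inferInstance, RingHom.id _, RingHom.Finite.id _, ?_⟩
      intro f hf hd
      rw [Polynomial.map_id]
      exact Splits.of_natDegree_le_one (by omega)
    obtain ⟨F₁, hF₁, hle, hr⟩ := bd_padic (d + 1) F hF
    obtain ⟨M, iM, φ, hφ, hs⟩ := ih F₁ hF₁
    let ι : F →+* F₁ := (IntermediateField.inclusion hle).toRingHom
    have hι : ι.Finite := by
      apply RingHom.Finite.of_comp_finite (f := algebraMap ℚ_[p] F)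
      have : ι.comp (algebraMap ℚ_[p] F) = algebraMap ℚ_[p] F₁ := by
        ext x; rfl
      rw [this, RingHom.finite_algebraMap]
      exact hF₁
    let ψ := (bdEmb F₁ (d + 1).factorial (d + 1).factorial_pos).comp (bdMap ι)
    have hψ : ψ.Finite := (bdEmb_finite _ _).comp (bdMap_finite ι hι)
    refine ⟨M, iM, φ.comp ψ, hφ.comp hψ, ?_⟩
    intro f hf hd
    rw [← Polynomial.map_map]
    rcases Nat.lt_or_ge f.natDegree (d + 1) with h | h
    · exact hs _ (hf.map _) (by rw [natDegree_map]; omega)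
    have hfd : f.natDegree = d + 1 := by omega
    have hcz : CharZero F := inferInstance
    obtain ⟨u, v, hu, hv, du, dv, huv⟩ := bd_laurent_step ι (d + 1) (by omega) (by
      intro q hq hqd hq0 hqi
      obtain ⟨i, hi, hqi⟩ := hqi
      obtain ⟨a, b, hab, ha, hb⟩ := bd_two_roots (q.map (algebraMap F (PadicAlgCl p))) (hq.map _)
        (by rw [natDegree_map]; omega)
        (by rw [natDegree_map, coeff_map, hqd, hq0, map_zero]) i
        (by rw [natDegree_map]; omega)
        (by rw [coeff_map]; simpa using hqi)
      have hmem : ∀ x, (q.map (algebraMap F (PadicAlgCl p))).eval x = 0 → x ∈ F₁ := by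
        intro x hx
        refine hr _ (hq.map _) (by rw [natDegree_map]; omega) (fun i => ?_) x hx
        rw [coeff_map]; exact (q.coeff i).2
      have hev : ∀ x : F₁, (q.map (algebraMap F (PadicAlgCl p))).eval (x : PadicAlgCl p) = 0 →
          (q.map ι).eval x = 0 := by
        intro x hx
        apply (algebraMap F₁ (PadicAlgCl p)).injective
        rw [map_zero, ← hx]
        have hc : (algebraMap F₁ (PadicAlgCl p)).comp ι = algebraMap F (PadicAlgCl p) := by
          ext y; rfl
        rw [← hc, ← Polynomial.map_map]
        exact (eval_map_apply _ _).symm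
      exact ⟨⟨a, hmem a ha⟩, ⟨b, hmem b hb⟩, fun h => hab (congrArg Subtype.val h),
        hev _ ha, hev _ hb⟩) f hf hfd
    rw [natDegree_map] at du dv
    have e : f.map ψ = u * v := huv
    rw [e, Polynomial.map_mul]
    exact (hs u hu (by omega)).mul (hs v hv (by omega))

end LaurentPart

/-- Let `p` be a prime, `L = ℚ_p((T))` the field of formal Laurent series over `ℚ_p`, and
`Ω` a fixed algebraic closure of `L`.  For any positive integer `d`, the intermediate field
of `Ω/L` generated by all elements of `Ω` whose degree over `L` is at most `d` (i.e. by the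
roots of all irreducible polynomials over `L` of degree at most `d`) is a finite extension
of `L`. -/
theorem adjoin_elements_of_bounded_degree_finiteDimensional_over_laurentSeries
    (p : ℕ) [Fact p.Prime] (d : ℕ) (hd : 0 < d) :
    FiniteDimensional (LaurentSeries ℚ_[p])
      (IntermediateField.adjoin (LaurentSeries ℚ_[p])
        {x : AlgebraicClosure (LaurentSeries ℚ_[p]) |
          (minpoly (LaurentSeries ℚ_[p]) x).natDegree ≤ d}) := by
  obtain ⟨M, iM, φ, hφ, hs⟩ := bd_laurent p d ⊥ inferInstance
  let ι : ℚ_[p] →+* (⊥ : IntermediateField ℚ_[p] (PadicAlgCl p)) := algebraMap _ _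
  have hι : ι.Finite := by
    rw [RingHom.finite_algebraMap]; infer_instance
  let χ : LaurentSeries ℚ_[p] →+* M := φ.comp (bdMap ι)
  have hχ : χ.Finite := hφ.comp (bdMap_finite ι hι)
  let _ : Algebra (LaurentSeries ℚ_[p]) M := χ.toAlgebra
  have hfin : FiniteDimensional (LaurentSeries ℚ_[p]) M := hχ
  let j : M →ₐ[LaurentSeries ℚ_[p]] AlgebraicClosure (LaurentSeries ℚ_[p]) :=
    IsAlgClosed.lift
  have hle : IntermediateField.adjoin (LaurentSeries ℚ_[p])
        {x : AlgebraicClosure (LaurentSeries ℚ_[p]) |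
          (minpoly (LaurentSeries ℚ_[p]) x).natDegree ≤ d} ≤ j.fieldRange := by
    rw [IntermediateField.adjoin_le_iff]
    intro x hx
    have hxi : IsIntegral (LaurentSeries ℚ_[p]) x :=
      (Algebra.IsAlgebraic.isAlgebraic x).isIntegral
    have hm := minpoly.monic hxi
    have hsp : ((minpoly (LaurentSeries ℚ_[p]) x).map χ).Splits := by
      have := hs ((minpoly (LaurentSeries ℚ_[p]) x).map (bdMap ι)) (hm.map _)
        (by rw [natDegree_map]; exact hx)
      rwa [Polynomial.map_map] at this
    obtain ⟨y, hy⟩ := hsp.mem_range_of_isRoot (hm.map χ).ne_zero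
      (i := (j : M →+* AlgebraicClosure (LaurentSeries ℚ_[p]))) (x := x) (by
        have e : (j : M →+* AlgebraicClosure (LaurentSeries ℚ_[p])).comp χ =
          algebraMap (LaurentSeries ℚ_[p]) (AlgebraicClosure (LaurentSeries ℚ_[p])) :=
          j.comp_algebraMap
        rw [Polynomial.map_map, e, IsRoot, eval_map_algebraMap]
        exact minpoly.aeval _ _)
    exact ⟨y, hy⟩
  have hfr : FiniteDimensional (LaurentSeries ℚ_[p]) j.fieldRange :=
    LinearMap.finiteDimensional_range j.toLinearMap
  exact FiniteDimensional.of_injective (IntermediateField.inclusion hle).toLinearMap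
    (IntermediateField.inclusion_injective hle)
end
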